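/- arXiv:1403.4861 — 2 statements merged into one kernel-verified Lean document; each statement's English description precedes it below -/
import Mathlib

section
/- Let G' be a graph on n' vertices containing a perfect matching M, and suppose the graph G* = (V', E* \ M) is planar, where E* is any edge set on V' with |E*| = OPT. If M'' is a maximum matching of (V', E' \ M) for some E' ⊇ E*, then OPT ≤ 3|M''| + 5|M| ≤ 5|M ∪ M''|. -/
open SimpleGraph

/-- `H` is a minor of `G`. -/
def SimpleGraph.HasMinor {V W : Type*} (G : SimpleGraph V) (H : SimpleGraph W) : Prop :=
  ∃ f : W → Set V,
    (∀ w, (f w).Nonempty) ∧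
    (∀ w, (G.induce (f w)).Connected) ∧
    (Pairwise fun w₁ w₂ => Disjoint (f w₁) (f w₂)) ∧
    (∀ w₁ w₂, H.Adj w₁ w₂ → ∃ v₁ ∈ f w₁, ∃ v₂ ∈ f w₂, G.Adj v₁ v₂)

/-- Wagner's characterization of planarity: no `K₅` and no `K₃,₃` minor. -/
def SimpleGraph.IsPlanar {V : Type*} (G : SimpleGraph V) : Prop :=
  ¬ G.HasMinor (completeGraph (Fin 5)) ∧
  ¬ G.HasMinor (completeBipartiteGraph (Fin 3) (Fin 3))

/-!
The bound rests on the planar matching lemma: if no matching of a planar graph on `n` vertices has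
more than `ν` edges, the graph has at most `3 * ν + 2 * n` edges. Here `n = 2|M|`, and removing `M`
from `E*` costs at most `|M|` edges.

By Tutte–Berge there is a set `U` of vertices with `n + |U| ≤ 2 * ν + o`, where `o` is the number of
odd components outside `U`. If `s` of these components are single vertices, then
`3 * o ≤ (n - |U|) + 2 * s`, and it remains to see that `|E| + s ≤ 3 * n + 2 * |U|`.

For this, give weight `5` to `U`, weight `2` to the `s` single vertices and weight `3` to the rest,
so that `|E|` has to be bounded by the total weight. It is enough to find an edge whose lighter end
`y` satisfies `|N(x) ∩ N(y)| < w y`: contracting `y` into the other end `x` loses at most `w y`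
edges. If there were no such edge, the link of a vertex of weight at least `3` would have so large
degrees that rotating a longest path in it yields a `K₄` or `K₂₃` minor, hence a `K₅` or `K₃₃`
minor of the whole graph.
-/

namespace PlanarMatching

section Minors

variable {V V' W W' : Type*} {G : SimpleGraph V} {H : SimpleGraph W}

theorem connected_induce_of_isChain {l : List V} (hl : l ≠ []) (hchain : l.IsChain G.Adj) :
    (G.induce {a | a ∈ l}).Connected := by
  induction l with
  | nil => exact absurd rfl hl
  | cons a l ih =>
    cases l with
    | nil =>
      rw [show {c | c ∈ [a]} = {a} by ext; simp]
      exact .of_subsingleton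
    | cons b l =>
      have hset : {c | c ∈ a :: b :: l} = {a} ∪ {c | c ∈ b :: l} := by ext; simp
      rw [List.isChain_cons_cons] at hchain
      rw [hset]
      exact connected_induce_union Preconnected.of_subsingleton
        (ih (by simp) hchain.2).preconnected rfl (by simp) hchain.1

theorem hasMinor_completeGraph [LinearOrder W] (f : W → Set V)
    (hconn : ∀ w, (G.induce (f w)).Connected)
    (hdisj : ∀ w₁ w₂, w₁ < w₂ → Disjoint (f w₁) (f w₂))
    (hadj : ∀ w₁ w₂, w₁ < w₂ → ∃ v₁ ∈ f w₁, ∃ v₂ ∈ f w₂, G.Adj v₁ v₂) :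
    G.HasMinor (completeGraph W) := by
  refine ⟨f, fun w ↦ Set.nonempty_coe_sort.mp (hconn w).nonempty, hconn, fun w₁ w₂ hne ↦ ?_,
    fun w₁ w₂ hne ↦ ?_⟩
  · exact hne.lt_or_gt.elim (hdisj w₁ w₂) fun hlt ↦ (hdisj w₂ w₁ hlt).symm
  · rcases Ne.lt_or_gt hne with hlt | hlt
    · exact hadj w₁ w₂ hlt
    · obtain ⟨v₂, h₂, v₁, h₁, h₂₁⟩ := hadj w₂ w₁ hlt
      exact ⟨v₁, h₁, v₂, h₂, h₂₁.symm⟩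

theorem hasMinor_completeBipartiteGraph_two {p : V} {O : Set V} (hO : (G.induce O).Connected)
    (hpO : p ∉ O) {q : W → V} (hq : q.Injective) (hqO : ∀ i, q i ∉ O) (hpq : ∀ i, G.Adj p (q i))
    (hadjO : ∀ i, ∃ o ∈ O, G.Adj (q i) o) :
    G.HasMinor (completeBipartiteGraph (Fin 2) W) := by
  have hside (i : Fin 2) : (G.induce (![{p}, O] i)).Connected := by
    fin_cases i
    · exact Connected.of_subsingleton (V := ({p} : Set V))
    · exact hO
  have hedge (i : Fin 2) (j : W) : ∃ v ∈ ![{p}, O] i, G.Adj v (q j) := by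
    fin_cases i
    · exact ⟨p, rfl, hpq j⟩
    · exact (hadjO j).imp fun o ⟨ho, hjo⟩ ↦ ⟨ho, hjo.symm⟩
  have hsides (i : Fin 2) (j : W) : q j ∉ ![{p}, O] i := by
    fin_cases i
    exacts [(hpq j).ne', hqO j]
  refine ⟨Sum.elim ![{p}, O] fun j ↦ {q j}, ?_, ?_, ?_, ?_⟩
  · rintro (i | j)
    exacts [Set.nonempty_coe_sort.mp (hside i).nonempty, Set.singleton_nonempty _]
  · rintro (i | j)
    · exact hside i
    · exact Connected.of_subsingleton (V := ({q j} : Set V))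
  · rintro (i | i) (j | j) hne
    · fin_cases i <;> fin_cases j <;> simp_all
    · simpa using hsides i j
    · simpa using hsides j i
    · simpa using hq.ne fun h ↦ hne (congrArg _ h)
  · rintro (i | i) (j | j) h
    · simp at h
    · obtain ⟨v, hv, hvq⟩ := hedge i j
      exact ⟨v, hv, _, rfl, hvq⟩
    · obtain ⟨v, hv, hvq⟩ := hedge j i
      exact ⟨_, rfl, v, hv, hvq.symm⟩
    · simp at h

theorem connected_induce_preimage {φ : V → V'} (hφ : ∀ b, (G.induce (φ ⁻¹' {b})).Connected)
    {s : Set V'} (hs : ((G.map φ).induce s).Connected) : (G.induce (φ ⁻¹' s)).Connected := by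
  have hfibre {a a' : φ ⁻¹' s} (h : φ a = φ a') : (G.induce (φ ⁻¹' s)).Reachable a a' := by
    have hsub : φ ⁻¹' {φ a} ⊆ φ ⁻¹' s := Set.preimage_mono (Set.singleton_subset_iff.mpr a.2)
    exact ((hφ (φ a)).preconnected ⟨a, rfl⟩ ⟨a', h.symm⟩).map (G.induceHomOfLE hsub).toHom
  have hlift {b b' : s} (hb : ((G.map φ).induce s).Reachable b b') :
      ∀ a a' : φ ⁻¹' s, φ a = b → φ a' = b' → (G.induce (φ ⁻¹' s)).Reachable a a' := by
    obtain ⟨walk⟩ := hb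
    induction walk with
    | nil => exact fun a a' ha ha' ↦ hfibre (ha.trans ha'.symm)
    | @cons b c b' h _ ih =>
      intro a a' ha ha'
      obtain ⟨-, x, y, hxy, hx, hy⟩ := (map_adj' ..).mp h
      let x' : φ ⁻¹' s := ⟨x, by simp [hx]⟩
      let y' : φ ⁻¹' s := ⟨y, by simp [hy]⟩
      have hadj : (G.induce (φ ⁻¹' s)).Adj x' y' := hxy
      exact (hfibre (a' := x') (ha.trans hx.symm)).trans (hadj.reachable.trans (ih y' a' hy ha'))
  have hne : Nonempty (φ ⁻¹' s) := by
    obtain ⟨b, hb⟩ := hs.nonempty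
    obtain ⟨a, ha⟩ := (hφ b).nonempty
    exact ⟨a, by rw [Set.mem_preimage, Set.mem_singleton_iff.mp ha]; exact hb⟩
  exact (connected_iff _).mpr
    ⟨fun a a' ↦ hlift (hs.preconnected ⟨φ a, a.2⟩ ⟨φ a', a'.2⟩) a a' rfl rfl, hne⟩

theorem hasMinor_of_map {φ : V → V'} (hφ : ∀ b, (G.induce (φ ⁻¹' {b})).Connected)
    (h : (G.map φ).HasMinor H) : G.HasMinor H := by
  obtain ⟨f, -, hconn, hdisj, hadj⟩ := h
  refine ⟨fun w ↦ φ ⁻¹' f w, fun w ↦ Set.nonempty_coe_sort.mp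
    (connected_induce_preimage hφ (hconn w)).nonempty, fun w ↦
    connected_induce_preimage hφ (hconn w), fun _ _ hw ↦ (hdisj hw).preimage φ, fun w₁ w₂ hw ↦ ?_⟩
  obtain ⟨b₁, hb₁, b₂, hb₂, h₁₂⟩ := hadj w₁ w₂ hw
  obtain ⟨-, a₁, a₂, ha, rfl, rfl⟩ := (map_adj' ..).mp h₁₂
  exact ⟨a₁, hb₁, a₂, hb₂, ha⟩

theorem isPlanar_map (hG : G.IsPlanar) {φ : V → V'}
    (hφ : ∀ b, (G.induce (φ ⁻¹' {b})).Connected) : (G.map φ).IsPlanar :=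
  ⟨fun h ↦ hG.1 (hasMinor_of_map hφ h), fun h ↦ hG.2 (hasMinor_of_map hφ h)⟩

/-- The link of a vertex `v`: the graph that `G` induces on the neighbours of `v`. -/
abbrev link (G : SimpleGraph V) (v : V) : SimpleGraph (G.neighborSet v) :=
  G.induce (G.neighborSet v)

/-- Given an `H'`-minor of the link of `v`, the branch set `{v}` can serve for `w₀`. -/
theorem hasMinor_of_hasMinor_link {v : V} {H' : SimpleGraph W'} {w₀ : W}
    (hH : H.induce {w₀}ᶜ ⊑ H') (h : (link G v).HasMinor H') : G.HasMinor H := by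
  classical
  obtain ⟨e⟩ := hH
  obtain ⟨f, -, hconn, hdisj, hadj⟩ := h
  let g (w : W) : Set V := if hw : w = w₀ then {v} else Subtype.val '' f (e ⟨w, hw⟩)
  have hg₀ : g w₀ = {v} := dif_pos rfl
  have hg {w : W} (hw : w ≠ w₀) : g w = Subtype.val '' f (e ⟨w, hw⟩) := dif_neg hw
  have hgconn (w : W) : (G.induce (g w)).Connected := by
    obtain rfl | hw := eq_or_ne w w₀
    · rw [hg₀]
      exact .of_subsingleton
    · rw [hg hw]
      refine Connected.map (H := G.induce _) ⟨fun a ↦ ⟨a.1, a.1, a.2, rfl⟩, fun h ↦ h⟩ ?_ (hconn _)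
      rintro ⟨_, a, ha, rfl⟩
      exact ⟨⟨a, ha⟩, rfl⟩
  have hgv {w : W} (hw : w ≠ w₀) : ∀ a ∈ g w, G.Adj v a := by
    rw [hg hw]
    rintro _ ⟨a, -, rfl⟩
    exact a.2
  have hgne (w : W) : (g w).Nonempty := Set.nonempty_coe_sort.mp (hgconn w).nonempty
  refine ⟨g, hgne, hgconn, fun w₁ w₂ hne ↦ ?_, fun w₁ w₂ hw ↦ ?_⟩
  · obtain rfl | h₁ := eq_or_ne w₁ w₀
    · exact hg₀ ▸ Set.disjoint_singleton_left.mpr fun hv ↦ (hgv hne.symm v hv).ne rfl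
    obtain rfl | h₂ := eq_or_ne w₂ w₀
    · exact hg₀ ▸ Set.disjoint_singleton_right.mpr fun hv ↦ (hgv hne v hv).ne rfl
    rw [hg h₁, hg h₂, Set.disjoint_image_iff Subtype.val_injective]
    exact hdisj (e.injective.ne fun h ↦ hne (congrArg Subtype.val h))
  · obtain rfl | h₁ := eq_or_ne w₁ w₀
    · obtain ⟨a, ha⟩ := hgne w₂
      exact ⟨v, by rw [hg₀]; rfl, a, ha, hgv hw.ne' a ha⟩
    obtain rfl | h₂ := eq_or_ne w₂ w₀
    · obtain ⟨a, ha⟩ := hgne w₁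
      exact ⟨a, ha, v, by rw [hg₀]; rfl, (hgv hw.ne a ha).symm⟩
    rw [hg h₁, hg h₂]
    obtain ⟨a₁, ha₁, a₂, ha₂, ha⟩ := hadj _ _ (e.toHom.map_adj (v := ⟨w₁, h₁⟩) (w := ⟨w₂, h₂⟩) hw)
    exact ⟨_, ⟨a₁, ha₁, rfl⟩, _, ⟨a₂, ha₂, rfl⟩, ha⟩

theorem not_hasMinor_K₄_link (hG : G.IsPlanar) (v : V) :
    ¬ (link G v).HasMinor (completeGraph (Fin 4)) := by
  refine fun h ↦ hG.1 (hasMinor_of_hasMinor_link (w₀ := 0)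
    ⟨⟨⟨fun i ↦ Fin.predAbove 0 i, ?_⟩, ?_⟩⟩ h)
  · rintro ⟨i, hi⟩ ⟨j, hj⟩ hij
    revert i j
    decide
  · rintro ⟨i, hi⟩ ⟨j, hj⟩ hij
    revert i j
    decide

theorem not_hasMinor_K₂₃_link (hG : G.IsPlanar) (v : V) :
    ¬ (link G v).HasMinor (completeBipartiteGraph (Fin 2) (Fin 3)) := by
  refine fun h ↦ hG.2 (hasMinor_of_hasMinor_link (w₀ := .inl 0)
    ⟨⟨⟨fun i ↦ i.1.map (Fin.predAbove 0) id, ?_⟩, ?_⟩⟩ h)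
  · rintro ⟨i | i, hi⟩ ⟨j | j, hj⟩ hij <;> simp_all
  · rintro ⟨i, hi⟩ ⟨j, hj⟩ hij
    revert i j
    decide

end Minors

section LongestPaths

variable {V : Type*} {G : SimpleGraph V} {P : Set V} {p x : V} {t u r : List V}

theorem exists_eq_append_cons_first {l : List V} (h : ∃ a ∈ l, a ∈ P) :
    ∃ s a r, l = s ++ a :: r ∧ a ∈ P ∧ ∀ b ∈ s, b ∉ P := by
  classical
  obtain ⟨a, ha⟩ := Option.isSome_iff_exists.mp
    (List.find?_isSome (p := (· ∈ P)).mpr (by simpa using h))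
  obtain ⟨haP, s, r, rfl, hs⟩ := List.find?_eq_some_iff_append.mp ha
  exact ⟨s, a, r, rfl, by simpa using haP, by simpa using hs⟩

theorem exists_eq_append_cons_last {l : List V} (h : ∃ a ∈ l, a ∈ P) :
    ∃ s a r, l = s ++ a :: r ∧ a ∈ P ∧ ∀ b ∈ r, b ∉ P := by
  obtain ⟨s, a, r, hl, ha, hs⟩ := exists_eq_append_cons_first (l := l.reverse) (by simpa using h)
  exact ⟨r.reverse, a, s.reverse, by simpa using congrArg List.reverse hl, ha, by simpa using hs⟩

theorem mem_of_append_cons_eq_append_cons {u₁ u₂ r₁ r₂ : List V} {x y : V}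
    (h : u₁ ++ x :: r₁ = u₂ ++ y :: r₂) (hlen : u₁.length ≤ u₂.length) (hne : y ≠ x) :
    y ∈ r₁ := by
  rcases List.append_eq_append_iff.mp h with ⟨w, rfl, hw⟩ | ⟨w, rfl, hw⟩
  · cases w <;> simp_all
  · cases w <;> simp_all

/-- `p :: t` lists the vertices of a path of `G` starting in the vertex `p` of `P`. -/
structure IsPathFrom (G : SimpleGraph V) (P : Set V) (p : V) (t : List V) : Prop where
  mem : p ∈ P
  nodup : (p :: t).Nodup
  isChain : (p :: t).IsChain G.Adj

open Classical in
/-- A path that starts in `P` and, among all such paths, has the most vertices in `P`. -/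
structure IsMaxPath (G : SimpleGraph V) (P : Set V) (p : V) (t : List V) : Prop
    extends IsPathFrom G P p t where
  countP_le : ∀ {p' t'}, IsPathFrom G P p' t' →
    (p' :: t').countP (· ∈ P) ≤ (p :: t).countP (· ∈ P)

/-- A chord at the start `p` of a maximal path `p :: (u ++ x :: r)`: an edge from `p` to a vertex
`x` such that `P` is met between `p` and `x`. -/
structure IsChord (G : SimpleGraph V) (P : Set V) (p : V) (u : List V) (x : V) (r : List V) :
    Prop where
  isMaxPath : IsMaxPath G P p (u ++ x :: r)
  adj : G.Adj p x
  exists_mem : ∃ e ∈ u, e ∈ P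

theorem exists_isMaxPath [Finite V] (hP : P.Nonempty) : ∃ p t, IsMaxPath G P p t := by
  classical
  have := Fintype.ofFinite V
  obtain ⟨p₀, hp₀⟩ := hP
  let counts : Set ℕ := {n | ∃ p t, IsPathFrom G P p t ∧ (p :: t).countP (· ∈ P) = n}
  have hne : counts.Nonempty := ⟨_, p₀, [], ⟨hp₀, by simp, by simp⟩, rfl⟩
  have hbdd : BddAbove counts := by
    refine ⟨Fintype.card V, ?_⟩
    rintro _ ⟨p, t, h, rfl⟩
    exact List.countP_le_length.trans h.nodup.length_le_card
  obtain ⟨p, t, h, hmax⟩ := Nat.sSup_mem hne hbdd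
  exact ⟨p, t, h, fun {p' t'} h' ↦ hmax ▸ le_csSup hbdd ⟨p', t', h', rfl⟩⟩

theorem IsMaxPath.mem_of_adj (h : IsMaxPath G P p t) {a : V} (haP : a ∈ P) (ha : G.Adj p a) :
    a ∈ t := by
  by_contra hat
  have hlonger := h.countP_le (p' := a) (t' := p :: t)
    ⟨haP, List.nodup_cons.mpr ⟨by simp [ha.ne', hat], h.nodup⟩,
      List.isChain_cons_cons.mpr ⟨ha.symm, h.isChain⟩⟩
  simp [haP] at hlonger

theorem IsMaxPath.mem_of_adj_adj (h : IsMaxPath G P p t) {q b : V} (hq : q ∉ p :: t)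
    (hpq : G.Adj p q) (hqb : G.Adj q b) (hbP : b ∈ P) (hbp : b ≠ p) : b ∈ t := by
  by_contra hbt
  have hlonger := h.countP_le (p' := b) (t' := q :: p :: t)
    ⟨hbP, List.nodup_cons.mpr ⟨by simp [hbt, hbp, hqb.ne'], List.nodup_cons.mpr ⟨hq, h.nodup⟩⟩,
      List.isChain_cons_cons.mpr
        ⟨hqb.symm, List.isChain_cons_cons.mpr ⟨hpq.symm, h.isChain⟩⟩⟩
  simp only [List.countP_cons, hbP, decide_true, if_true] at hlonger
  omega

/-- Pósa rotation. -/
theorem IsMaxPath.rotate {u₁ s : List V} {e : V}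
    (h : IsMaxPath G P p (u₁ ++ e :: s ++ x :: r)) (hpx : G.Adj p x) (heP : e ∈ P)
    (hs : ∀ b ∈ s, b ∉ P) : IsMaxPath G P e (u₁.reverse ++ p :: x :: r) := by
  have hperm : (p :: (u₁ ++ e :: s ++ x :: r)).Perm (s ++ e :: (u₁.reverse ++ p :: x :: r)) := by
    classical
    simp only [List.perm_iff_count, List.count_cons, List.count_append, List.count_reverse]
    omega
  have heq : e :: (u₁.reverse ++ p :: x :: r) = (p :: u₁ ++ [e]).reverse ++ x :: r := by simp
  refine ⟨⟨heP, (List.nodup_append.mp (hperm.nodup_iff.mp h.nodup)).2.1, ?_⟩,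
    fun h' ↦ (h.countP_le h').trans (le_of_eq ?_)⟩
  · have hchain : ((p :: u₁ ++ [e]) ++ (s ++ x :: r)).IsChain G.Adj := by simpa using h.isChain
    rw [heq, List.isChain_append, List.isChain_reverse]
    refine ⟨hchain.left_of_append.imp fun _ _ h ↦ h.symm, hchain.right_of_append.right_of_append,
      ?_⟩
    simp only [List.cons_append, List.getLast?_reverse, List.head?_cons, Option.mem_some_iff]
    rintro _ rfl _ rfl
    exact hpx
  · rw [hperm.countP_eq, List.countP_append, List.countP_eq_zero.mpr (by simpa using hs), zero_add]

theorem hasMinor_K₄_of_isChain (hnodup : (p :: (u ++ x :: r)).Nodup)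
    (hchain : (p :: (u ++ x :: r)).IsChain G.Adj) (hpx : G.Adj p x) (hpr : ∃ y ∈ r, G.Adj p y)
    (hur : ∃ e ∈ u, ∃ z ∈ r, G.Adj e z) : G.HasMinor (completeGraph (Fin 4)) := by
  have hu : u ≠ [] := by rintro rfl; simp at hur
  have hr : r ≠ [] := by rintro rfl; simp at hpr
  have huxr : (u ++ x :: r).IsChain G.Adj := (List.isChain_cons.mp hchain).2
  have hxr : (x :: r).IsChain G.Adj := huxr.right_of_append
  have hp_head : G.Adj p (u.head hu) :=
    (List.isChain_cons.mp hchain).1 _ (by simp [List.head?_append, List.head?_eq_some_head hu])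
  have hlast_x : G.Adj (u.getLast hu) x :=
    (List.isChain_append.mp huxr).2.2 _ (List.getLast?_eq_some_getLast hu) _ rfl
  have hx_head : G.Adj x (r.head hr) :=
    (List.isChain_cons.mp hxr).1 _ (List.head?_eq_some_head hr)
  simp only [List.nodup_cons, List.nodup_append, List.mem_append, List.mem_cons, not_or] at hnodup
  obtain ⟨⟨hpu, -, hp_r⟩, -, ⟨hx_r, -⟩, hu_xr⟩ := hnodup
  refine hasMinor_completeGraph ![{p}, {a | a ∈ u}, {x}, {a | a ∈ r}] ?_ ?_ ?_
  · intro i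
    fin_cases i
    · exact Connected.of_subsingleton (V := ({p} : Set V))
    · exact connected_induce_of_isChain hu huxr.left_of_append
    · exact Connected.of_subsingleton (V := ({x} : Set V))
    · exact connected_induce_of_isChain hr (List.isChain_cons.mp hxr).2
  · intro i j hij
    fin_cases i <;> fin_cases j <;> first | exact absurd hij (by decide) | skip
    exacts [Set.disjoint_singleton_left.mpr hpu, Set.disjoint_singleton.mpr hpx.ne,
      Set.disjoint_singleton_left.mpr hp_r,
      Set.disjoint_singleton_right.mpr fun hxu ↦ hu_xr x hxu x (.inl rfl) rfl,
      Set.disjoint_left.mpr fun a hau har ↦ hu_xr a hau a (.inr har) rfl,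
      Set.disjoint_singleton_left.mpr hx_r]
  · intro i j hij
    fin_cases i <;> fin_cases j <;> first | exact absurd hij (by decide) | skip
    exacts [⟨p, rfl, _, List.head_mem hu, hp_head⟩, ⟨p, rfl, x, rfl, hpx⟩,
      ⟨p, rfl, hpr⟩, ⟨_, List.getLast_mem hu, x, rfl, hlast_x⟩, hur,
      ⟨x, rfl, _, List.head_mem hr, hx_head⟩]

/-- Take a chord with `u` as short as possible and rotate along it to the last vertex `e` of `P` in
`u`. By minimality the second chords of both paths end in `r`, so `p`, `u`, `x`, `r` form a `K₄`. -/
theorem hasMinor_K₄_of_exists_isChord [Finite V] (hP : P.Nonempty)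
    (hchord : ∀ {p t}, IsMaxPath G P p t → ∀ z, ∃ u x r, t = u ++ x :: r ∧ x ≠ z ∧
      IsChord G P p u x r) :
    G.HasMinor (completeGraph (Fin 4)) := by
  obtain ⟨p, u, x, r, hc, hmin⟩ : ∃ p u x r, IsChord G P p u x r ∧
      ∀ {p' u' x' r'}, IsChord G P p' u' x' r' → u.length ≤ u'.length := by
    obtain ⟨p₀, t₀, h₀⟩ := exists_isMaxPath (G := G) hP
    obtain ⟨u₀, x₀, r₀, -, -, hc₀⟩ := hchord h₀ p₀
    obtain ⟨⟨p, u, x, r⟩, hc, hmin⟩ := (measure fun c : V × List V × V × List V ↦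
      c.2.1.length).wf.has_min {c | IsChord G P c.1 c.2.1 c.2.2.1 c.2.2.2} ⟨⟨p₀, u₀, x₀, r₀⟩, hc₀⟩
    exact ⟨p, u, x, r, hc, fun {p' u' x' r'} h ↦ not_lt.mp (hmin (p', u', x', r') h)⟩
  obtain ⟨y, hyr, hpy⟩ : ∃ y ∈ r, G.Adj p y := by
    obtain ⟨u', y, r', heq, hyx, hc'⟩ := hchord hc.isMaxPath x
    exact ⟨y, mem_of_append_cons_eq_append_cons heq (hmin hc') hyx, hc'.adj⟩
  obtain ⟨e, heu, z, hzr, hez⟩ : ∃ e ∈ u, ∃ z ∈ r, G.Adj e z := by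
    obtain ⟨u₁, e, s, rfl, heP, hs⟩ := exists_eq_append_cons_last hc.exists_mem
    obtain ⟨u', z, r', heq, hzx, hc'⟩ := hchord (hc.isMaxPath.rotate hc.adj heP hs) x
    rw [List.append_cons] at heq
    have hlen : (u₁.reverse ++ [p]).length ≤ u'.length := (hmin hc').trans' (by simp)
    exact ⟨e, by simp, z, mem_of_append_cons_eq_append_cons heq hlen hzx, hc'.adj⟩
  exact hasMinor_K₄_of_isChain hc.isMaxPath.nodup hc.isMaxPath.isChain hc.adj ⟨y, hyr, hpy⟩
    ⟨e, heu, z, hzr, hez⟩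

theorem IsMaxPath.exists_mem_mem (h : IsMaxPath G P p t) (hP : G.IsVertexCover P)
    (hdeg : ∀ a, 2 ≤ (G.neighborSet a).ncard) : ∃ b ∈ t, b ∈ P := by
  by_contra! ht
  obtain ⟨q, hpq⟩ : (G.neighborSet p).Nonempty := Set.nonempty_of_ncard_ne_zero (by grind)
  obtain ⟨b, hqb, hbp⟩ := Set.exists_ne_of_one_lt_ncard (hdeg q) p
  have hqP : q ∉ P := fun hqP ↦ ht q (h.mem_of_adj hqP hpq) hqP
  have hbP : b ∈ P := (hP hqb).resolve_left hqP
  have hlonger := h.countP_le (p' := b) (t' := [q, p])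
    ⟨hbP, by simp [hbp, hqb.ne', hpq.ne'], by simp [hpq.symm, hqb.symm]⟩
  obtain ⟨a, hat, haP⟩ : ∃ a ∈ t, a ∈ P := by simpa [h.mem, hbP, hqP] using hlonger
  exact ht a hat haP

theorem IsMaxPath.exists_adj_of_adj {s t' : List V} {b q : V}
    (h : IsMaxPath G P p (s ++ b :: t')) (hbP : b ∈ P) (hs : ∀ a ∈ s, a ∉ P)
    (hP : G.IsVertexCover P) (hdeg : ∀ a, 2 ≤ (G.neighborSet a).ncard)
    (hpq : G.Adj p q) (hqP : q ∉ P) (hqt : q ∉ t') : ∃ o ∈ b :: t', G.Adj q o := by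
  by_cases hqs : q ∈ s
  · obtain ⟨s₁, s₂, rfl⟩ := List.append_of_mem hqs
    have hchain : (q :: (s₂ ++ b :: t')).IsChain G.Adj := by
      have := (List.isChain_cons.mp h.isChain).2
      rw [List.append_assoc] at this
      exact this.right_of_append
    cases s₂ with
    | nil => exact ⟨b, by simp, (List.isChain_cons_cons.mp hchain).1⟩
    | cons c s₂ =>
      have hqc : G.Adj q c := (List.isChain_cons_cons.mp hchain).1
      exact absurd (hP hqc) (not_or.mpr ⟨hqP, hs c (by simp)⟩)
  · obtain ⟨o, hqo, hop⟩ := Set.exists_ne_of_one_lt_ncard (hdeg q) p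
    have hoP : o ∈ P := (hP hqo).resolve_left hqP
    have hqb : q ≠ b := fun hqb ↦ hqP (hqb ▸ hbP)
    have hot := h.mem_of_adj_adj (by simp [hpq.ne', hqs, hqb, hqt]) hpq hqo hoP hop
    exact ⟨o, (List.mem_append.mp hot).resolve_left fun hos ↦ hs o hos hoP, hqo⟩

theorem IsMaxPath.ncard_lt_three_or_hasMinor_K₂₃ {s t' : List V} {b : V}
    (h : IsMaxPath G P p (s ++ b :: t')) (hbP : b ∈ P) (hs : ∀ a ∈ s, a ∉ P)
    (hP : G.IsVertexCover P) (hdeg : ∀ a, 2 ≤ (G.neighborSet a).ncard) :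
    {q | G.Adj p q ∧ q ∉ P ∧ q ∉ t'}.ncard < 3 ∨
      G.HasMinor (completeBipartiteGraph (Fin 2) (Fin 3)) := by
  refine lt_or_ge _ 3 |>.imp_right fun hcard ↦ ?_
  set T := {q | G.Adj p q ∧ q ∉ P ∧ q ∉ t'}
  have : Finite T := Set.finite_of_ncard_ne_zero (by omega)
  have := Fintype.ofFinite T
  obtain ⟨q⟩ : Nonempty (Fin 3 ↪ T) := Function.Embedding.nonempty_of_card_le (by
    rwa [Fintype.card_fin, ← Nat.card_eq_fintype_card, Nat.card_coe_set_eq])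
  have hO : (G.induce {a | a ∈ b :: t'}).Connected :=
    connected_induce_of_isChain (by simp) (List.isChain_cons.mp h.isChain).2.right_of_append
  have hpO : p ∉ b :: t' := fun hp ↦
    (List.nodup_cons.mp h.nodup).1 (List.mem_append_right s hp)
  refine hasMinor_completeBipartiteGraph_two hO hpO (q := fun i ↦ q i)
    (Subtype.val_injective.comp q.injective) (fun i ↦ ?_) (fun i ↦ (q i).2.1) fun i ↦ ?_
  all_goals obtain ⟨hpq, hqP, hqt⟩ := (q i).2
  · exact List.not_mem_cons_of_ne_of_not_mem (fun hqb ↦ hqP (hqb ▸ hbP)) hqt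
  · exact h.exists_adj_of_adj hbP hs hP hdeg hpq hqP hqt

theorem IsMaxPath.exists_isChord [Finite V] (h : IsMaxPath G P p t)
    (hK : ¬ G.HasMinor (completeBipartiteGraph (Fin 2) (Fin 3)))
    (hP : G.IsVertexCover P) (hdeg : ∀ a, 2 ≤ (G.neighborSet a).ncard)
    (hdegP : ∀ a ∈ P, 3 ≤ (G.neighborSet a).ncard ∧ G.neighborSet a ⊆ P ∨
      5 ≤ (G.neighborSet a).ncard) (z : V) :
    ∃ u x r, t = u ++ x :: r ∧ x ≠ z ∧ IsChord G P p u x r := by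
  obtain ⟨s, b, t', rfl, hbP, hs⟩ := exists_eq_append_cons_first (h.exists_mem_mem hP hdeg)
  set T := {q | G.Adj p q ∧ q ∉ P ∧ q ∉ t'}
  set C := {x | G.Adj p x ∧ x ∈ t'}
  have hT : T.ncard < 3 := (h.ncard_lt_three_or_hasMinor_K₂₃ hbP hs hP hdeg).resolve_right hK
  have hT₀ (hN : G.neighborSet p ⊆ P) : T.ncard = 0 := by
    rw [Set.ncard_eq_zero, Set.eq_empty_iff_forall_notMem]
    exact fun q hq ↦ hq.2.1 (hN hq.1)
  have hcover : G.neighborSet p ⊆ insert b (T ∪ C) := by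
    intro a ha
    by_cases hat : a ∈ t'
    · exact .inr (.inr ⟨ha, hat⟩)
    by_cases haP : a ∈ P
    · have hmem := h.mem_of_adj haP ha
      simp only [List.mem_append, List.mem_cons, hat, or_false] at hmem
      exact .inl (hmem.resolve_left fun has ↦ hs a has haP)
    · exact .inr (.inl ⟨ha, haP, hat⟩)
  have hcard : (G.neighborSet p).ncard ≤ T.ncard + C.ncard + 1 :=
    calc
      _ ≤ (insert b (T ∪ C)).ncard := Set.ncard_le_ncard hcover
      _ ≤ (T ∪ C).ncard + 1 := Set.ncard_insert_le b _
      _ ≤ T.ncard + C.ncard + 1 := by gcongr; exact Set.ncard_union_le T C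
  have hC : 1 < C.ncard := by
    rcases hdegP p h.mem with ⟨h3, hN⟩ | h5
    · have := hT₀ hN
      omega
    · omega
  obtain ⟨x, ⟨hpx, hxt⟩, hxz⟩ := Set.exists_ne_of_one_lt_ncard hC z
  obtain ⟨t₁, r, rfl⟩ := List.append_of_mem hxt
  exact ⟨s ++ b :: t₁, x, r, by simp, hxz, by simpa using h, hpx, b, by simp, hbP⟩

theorem hasMinor_K₄_or_K₂₃ [Finite V] (hne : P.Nonempty) (hP : G.IsVertexCover P)
    (hdeg : ∀ a, 2 ≤ (G.neighborSet a).ncard)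
    (hdegP : ∀ a ∈ P, 3 ≤ (G.neighborSet a).ncard ∧ G.neighborSet a ⊆ P ∨
      5 ≤ (G.neighborSet a).ncard) :
    G.HasMinor (completeGraph (Fin 4)) ∨ G.HasMinor (completeBipartiteGraph (Fin 2) (Fin 3)) :=
  or_iff_not_imp_right.mpr fun hK ↦
    hasMinor_K₄_of_exists_isChord hne fun h ↦ h.exists_isChord hK hP hdeg hdegP

end LongestPaths

section EdgeBound

variable {V V' : Type*} {G : SimpleGraph V} {w : V → ℕ}

/-- Vertex weights whose sum bounds the number of edges of a planar graph. For a set `U` of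
vertices, weight `5` is meant for `U`, weight `2` for the vertices all of whose neighbours lie in
`U`, and weight `3` for the others. -/
structure IsWeighting (G : SimpleGraph V) (w : V → ℕ) : Prop where
  eq_or (v : V) : w v = 2 ∨ w v = 3 ∨ w v = 5
  eq_five_of_adj {u v : V} : G.Adj u v → w u = 2 → w v = 5

theorem IsWeighting.map (hw : IsWeighting G w) {w' : V' → ℕ} {φ : V → V'}
    (hw' : ∀ v, w' v = 2 ∨ w' v = 3 ∨ w' v = 5) (hle : ∀ v, w v ≤ w' (φ v)) :
    IsWeighting (G.map φ) w' where
  eq_or := hw'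
  eq_five_of_adj := by
    rintro _ _ hadj htwo
    obtain ⟨-, a, b, hab, rfl, rfl⟩ := (map_adj' ..).mp hadj
    have ha : w a = 2 := by grind [hw.eq_or a, hle a]
    grind [hw.eq_five_of_adj hab ha, hle b, hw' (φ b)]

theorem ncard_neighborSet_link {v : V} (y : G.neighborSet v) :
    ((link G v).neighborSet y).ncard = (G.commonNeighbors v y).ncard := by
  rw [← Set.ncard_image_of_injective _ Subtype.val_injective]
  congr 1
  ext z
  simp [mem_commonNeighbors, and_comm]

/-- Otherwise the link of an endpoint of weight at least `3` would have large degrees, hence a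
`K₄` or a `K₂₃` minor. -/
theorem IsWeighting.exists_adj_ncard_commonNeighbors_lt [Finite V] (hw : IsWeighting G w)
    (hG : G.IsPlanar) (hne : G ≠ ⊥) :
    ∃ u v, G.Adj u v ∧ w v ≤ w u ∧ (G.commonNeighbors u v).ncard < w v := by
  by_contra! hall
  obtain ⟨v, b, hvb, hv⟩ : ∃ v b, G.Adj v b ∧ w v ≠ 2 := by
    obtain ⟨a, b, hab⟩ := ne_bot_iff_exists_adj.mp hne
    by_cases ha : w a = 2
    · exact ⟨b, a, hab.symm, by simp [hw.eq_five_of_adj hab ha]⟩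
    · exact ⟨a, b, hab, ha⟩
  have hdeg (y : G.neighborSet v) : min (w v) (w y) ≤ ((link G v).neighborSet y).ncard := by
    rw [ncard_neighborSet_link]
    rcases le_total (w y) (w v) with h | h
    · exact min_le_right _ _ |>.trans (hall v y y.2 h)
    · rw [G.commonNeighbors_symm]
      exact min_le_left _ _ |>.trans (hall y v y.2.symm h)
  set P : Set (G.neighborSet v) := {y | w y ≠ 2}
  have hP : (link G v).IsVertexCover P := fun a b hab ↦
    or_iff_not_imp_left.mpr fun ha ↦ by
      have hb : w b = 5 := hw.eq_five_of_adj hab (not_not.mp ha)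
      simp [P, hb]
  have hdeg_two (y) : 2 ≤ ((link G v).neighborSet y).ncard := by
    grind [hdeg y, hw.eq_or v, hw.eq_or y]
  have hP_ne : P.Nonempty := by
    obtain ⟨c, hc⟩ : ((link G v).neighborSet ⟨b, hvb⟩).Nonempty :=
      Set.nonempty_of_ncard_ne_zero (by grind)
    exact (hP hc).elim (fun h ↦ ⟨_, h⟩) fun h ↦ ⟨_, h⟩
  have hdegP (y) (hy : y ∈ P) : 3 ≤ ((link G v).neighborSet y).ncard ∧
      (link G v).neighborSet y ⊆ P ∨ 5 ≤ ((link G v).neighborSet y).ncard := by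
    by_cases hfive : w v = 5 ∧ w y = 5
    · exact .inr (by simpa [hfive] using hdeg y)
    · refine .inl ⟨by grind [hdeg y, hw.eq_or v, hw.eq_or y], fun z hz hz2 ↦ hfive ?_⟩
      exact ⟨hw.eq_five_of_adj z.2.symm hz2, hw.eq_five_of_adj (Adj.symm hz) hz2⟩
  exact (hasMinor_K₄_or_K₂₃ hP_ne hP hdeg_two hdegP).elim (not_hasMinor_K₄_link hG v)
    (not_hasMinor_K₂₃_link hG v)

open Classical in
/-- The map identifying `y` with `c`, so that `G.map (identify h)` is `G` with `y` contracted
into `c`. -/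
noncomputable def identify {c y : V} (h : c ≠ y) (x : V) : {x // x ≠ y} :=
  if hx : x = y then ⟨c, h⟩ else ⟨x, hx⟩

@[simp] theorem identify_self {c y : V} (h : c ≠ y) : identify h y = ⟨c, h⟩ := dif_pos rfl

theorem identify_of_ne {c y x : V} (h : c ≠ y) (hx : x ≠ y) : identify h x = ⟨x, hx⟩ := dif_neg hx

theorem connected_induce_preimage_identify {c y : V} (h : G.Adj c y) (b : {x // x ≠ y}) :
    (G.induce (identify h.ne ⁻¹' {b})).Connected := by
  by_cases hb : b = c
  · have hfibre : identify h.ne ⁻¹' {b} = {c, y} := by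
      ext x
      by_cases hx : x = y <;> simp [identify, hx, Subtype.ext_iff, hb]
    rw [hfibre]
    exact induce_pair_connected_of_adj h
  · have hfibre : identify h.ne ⁻¹' {b} = {b.1} := by
      ext x
      by_cases hx : x = y
      · simp [identify, hx, Subtype.ext_iff, Ne.symm hb, b.2.symm]
      · simp [identify, hx, Subtype.ext_iff]
    rw [hfibre]
    exact .of_subsingleton

theorem ncard_edgeSet_le_map_identify [Finite V] {c y : V} (h : G.Adj c y) :
    G.edgeSet.ncard ≤
      (G.map (identify h.ne)).edgeSet.ncard + (G.commonNeighbors c y).ncard + 1 := by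
  classical
  let lift (e : Sym2 {x // x ≠ y}) : Sym2 V :=
    if e.map Subtype.val ∈ G.edgeSet then e.map Subtype.val
    else e.map (Equiv.swap c y ∘ Subtype.val)
  set cover := insert s(c, y)
    (lift '' (G.map (identify h.ne)).edgeSet ∪ (s(y, ·)) '' G.commonNeighbors c y)
  have hcover_y (b : V) (hyb : G.Adj y b) : s(y, b) ∈ cover := by
    obtain rfl | hbc := eq_or_ne b c
    · exact .inl Sym2.eq_swap
    by_cases hcb : G.Adj c b
    · exact .inr (.inr ⟨b, ⟨hcb, hyb⟩, rfl⟩)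
    · refine .inr (.inl ⟨s(⟨c, h.ne⟩, ⟨b, hyb.ne'⟩), ?_, ?_⟩)
      · exact (map_adj' ..).mpr ⟨by simp [hbc.symm], y, b, hyb, by simp,
          identify_of_ne h.ne hyb.ne'⟩
      · simp [lift, hcb, Equiv.swap_apply_of_ne_of_ne hbc hyb.ne']
  have hcover : G.edgeSet ⊆ cover := by
    intro e he
    induction e with
    | _ a b =>
    obtain rfl | hay := eq_or_ne a y
    · exact hcover_y b he
    obtain rfl | hby := eq_or_ne b y
    · exact Sym2.eq_swap ▸ hcover_y a (Adj.symm he)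
    · refine .inr (.inl ⟨s(⟨a, hay⟩, ⟨b, hby⟩), ?_, if_pos he⟩)
      exact (map_adj' ..).mpr ⟨by simpa using Adj.ne he, a, b, he, identify_of_ne h.ne hay,
        identify_of_ne h.ne hby⟩
  calc
    _ ≤ cover.ncard := Set.ncard_le_ncard hcover
    _ ≤ _ := Set.ncard_insert_le _ _
    _ ≤ _ := by
      gcongr
      exact (Set.ncard_union_le _ _).trans (add_le_add Set.ncard_image_le Set.ncard_image_le)

theorem IsWeighting.ncard_edgeSet_le_sum [Fintype V] (hw : IsWeighting G w) (hG : G.IsPlanar) :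
    G.edgeSet.ncard ≤ ∑ v, w v := by
  classical
  induction hn : Fintype.card V generalizing V with
  | zero =>
    have := Fintype.card_eq_zero_iff.mp hn
    simp [Subsingleton.elim G ⊥]
  | succ n ih =>
    obtain rfl | hne := eq_or_ne G ⊥
    · simp
    obtain ⟨c, y, hcy, hle, hlt⟩ := hw.exists_adj_ncard_commonNeighbors_lt hG hne
    have hw' : IsWeighting (G.map (identify hcy.ne)) fun x ↦ w x := by
      refine hw.map (fun x ↦ hw.eq_or x) fun x ↦ ?_
      obtain rfl | hx := eq_or_ne x y
      · simpa using hle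
      · simp [identify_of_ne, hx]
    have hG' := isPlanar_map hG (connected_induce_preimage_identify hcy)
    have hrec := ih hw' hG' (by simp [Fintype.card_subtype_compl, hn])
    have hedges := ncard_edgeSet_le_map_identify hcy
    rw [Fintype.sum_eq_add_sum_subtype_ne w y]
    omega

theorem ncard_edgeSet_add_ncard_neighborSet_subset_le [Finite V] (hG : G.IsPlanar) (U : Set V) :
    G.edgeSet.ncard + {v | v ∉ U ∧ G.neighborSet v ⊆ U}.ncard ≤ 3 * Nat.card V + 2 * U.ncard := by
  classical
  have := Fintype.ofFinite V
  set W := {v | v ∉ U ∧ G.neighborSet v ⊆ U}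
  let w (v : V) : ℕ := if v ∈ U then 5 else if v ∈ W then 2 else 3
  have hw : IsWeighting G w := by
    refine ⟨fun v ↦ by grind, fun {u v} huv hu ↦ ?_⟩
    have huW : u ∈ W := by grind
    exact if_pos (huW.2 huv)
  have hcount (S : Set V) : S.ncard = ∑ v, if v ∈ S then 1 else 0 := by
    simp [Set.ncard_eq_toFinset_card']
  calc
    _ ≤ ∑ v, w v + W.ncard := by gcongr; exact hw.ncard_edgeSet_le_sum hG
    _ = ∑ v, (3 + 2 * if v ∈ U then 1 else 0) := by
      rw [hcount, ← Finset.sum_add_distrib]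
      refine Finset.sum_congr rfl fun v _ ↦ ?_
      have : v ∈ W → v ∉ U := And.left
      grind
    _ = _ := by
      rw [Finset.sum_add_distrib, ← Finset.mul_sum, ← hcount]
      simp [mul_comm]

end EdgeBound

section TutteBerge

variable {V W K : Type*} {G : SimpleGraph V} {H : SimpleGraph W}

theorem ncard_verts_eq_two_mul [Finite V] {M : G.Subgraph} (hM : M.IsMatching) :
    M.verts.ncard = 2 * M.edgeSet.ncard := by
  classical
  cases nonempty_fintype V
  have hdegree (v : V) : M.degree v = if v ∈ M.verts then 1 else 0 := by
    split_ifs with hv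
    · exact Subgraph.isMatching_iff_forall_degree.mp hM v hv
    · exact Subgraph.degree_of_notMem_verts hv
  calc M.verts.ncard = ∑ v, M.spanningCoe.degree v := by
        simp only [Subgraph.degree_spanningCoe, hdegree, Finset.sum_boole, Nat.cast_id]
        rw [Set.ncard_eq_toFinset_card', Set.filter_mem_univ_eq_toFinset]
    _ = 2 * M.edgeSet.ncard := by
        rw [sum_degrees_eq_twice_card_edges, ← M.edgeSet_spanningCoe, ← coe_edgeFinset,
          Set.ncard_coe_finset]

/-- The graph obtained from `G` by adding the elements of `K` as vertices adjacent to all others. -/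
def addUniversal (G : SimpleGraph V) (K : Type*) : SimpleGraph (V ⊕ K) :=
  (Gᶜ ⊕g (⊥ : SimpleGraph K))ᶜ

@[simp] theorem addUniversal_adj_inl_inl {v w : V} :
    (addUniversal G K).Adj (.inl v) (.inl w) ↔ G.Adj v w := by
  simp only [addUniversal, compl_adj, ne_eq, Sum.inl.injEq, sum_adj, not_and, not_not]
  exact ⟨fun h ↦ h.2 h.1, fun h ↦ ⟨h.ne, fun _ ↦ h⟩⟩

theorem addUniversal_adj_inr {x : V ⊕ K} {i : K} (hx : x ≠ .inr i) :
    (addUniversal G K).Adj (.inr i) x := by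
  rw [addUniversal, compl_adj]
  refine ⟨hx.symm, ?_⟩
  cases x <;> simp

theorem exists_isMatching_card_le [Finite V] [Finite K] {M : (addUniversal G K).Subgraph}
    (hM : M.IsPerfectMatching) :
    ∃ N : G.Subgraph, N.IsMatching ∧ Nat.card V ≤ 2 * N.edgeSet.ncard + Nat.card K := by
  let N : G.Subgraph :=
    { verts := {v | ∃ w, M.Adj (.inl v) (.inl w)}
      Adj v w := M.Adj (.inl v) (.inl w)
      adj_sub h := addUniversal_adj_inl_inl.mp (M.adj_sub h)
      edge_vert h := ⟨_, h⟩
      symm := ⟨fun _ _ h ↦ h.symm⟩ }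
  have hN : N.IsMatching := by
    rintro v ⟨w, hvw⟩
    exact ⟨w, hvw, fun z hvz ↦ Sum.inl_injective (hM.1.eq_of_adj_left hvz hvw)⟩
  have hpartner (v : ↥N.vertsᶜ) : ∃ i : K, M.Adj (.inl v) (.inr i) := by
    obtain ⟨w | i, hv, -⟩ := hM.1 (hM.2 (.inl v))
    · exact absurd ⟨w, hv⟩ v.2
    · exact ⟨i, hv⟩
  choose partner hadj using hpartner
  have hpartner_inj : partner.Injective := fun v w hvw ↦ Subtype.ext <| Sum.inl_injective <|
    hM.1.eq_of_adj_right (hadj v) (hvw ▸ hadj w)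
  have hcompl : N.vertsᶜ.ncard ≤ Nat.card K := Nat.card_le_card_of_injective _ hpartner_inj
  exact ⟨N, hN, by
    rw [← ncard_verts_eq_two_mul hN, ← Set.ncard_add_ncard_compl N.verts]; gcongr⟩

theorem ncard_oddComponents_congr (e : G ≃g H) :
    G.oddComponents.ncard = H.oddComponents.ncard :=
  Nat.card_congr <| e.connectedComponentEquiv.subtypeEquiv fun C ↦
    iff_of_eq <| congrArg Odd <| Nat.card_congr <| ConnectedComponent.isoEquivSupp e C

theorem exists_ncard_lt_ncard_oddComponents [Finite V]
    (hG : ∀ M : G.Subgraph, ¬ M.IsPerfectMatching) :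
    ∃ T : Set V, T.ncard < (G.induce Tᶜ).oddComponents.ncard := by
  cases nonempty_fintype V
  have h : ¬ ∃ M : G.Subgraph, M.IsPerfectMatching := not_exists.mpr hG
  rw [tutte] at h
  push Not at h
  obtain ⟨T, hT⟩ := h
  refine ⟨T, ?_⟩
  rw [induce_eq_coe_induce_top, Set.compl_eq_univ_sdiff]
  exact hT

theorem exists_ncard_add_two_le_ncard_oddComponents [Finite V] (hV : Even (Nat.card V))
    (hG : ∀ M : G.Subgraph, ¬ M.IsPerfectMatching) :
    ∃ T : Set V, T.ncard + 2 ≤ (G.induce Tᶜ).oddComponents.ncard := by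
  obtain ⟨T, hT⟩ := exists_ncard_lt_ncard_oddComponents hG
  refine ⟨T, ?_⟩
  have hparity := (G.induce Tᶜ).odd_ncard_oddComponents
  have hcard := Set.ncard_add_ncard_compl T
  rw [← Nat.card_coe_set_eq Tᶜ] at hcard
  grind

theorem ncard_oddComponents_le_one (hG : G.Preconnected) : G.oddComponents.ncard ≤ 1 :=
  have := hG.subsingleton_connectedComponent
  Set.ncard_le_one_of_subsingleton _

theorem preconnected_induce_addUniversal {s : Set (V ⊕ K)} {i : K} (hi : .inr i ∈ s) :
    ((addUniversal G K).induce s).Preconnected := by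
  have hreach (x : s) : ((addUniversal G K).induce s).Reachable ⟨.inr i, hi⟩ x := by
    by_cases hx : x = ⟨.inr i, hi⟩
    · rw [hx]
    · exact Adj.reachable (addUniversal_adj_inr fun h ↦ hx (Subtype.ext h))
  exact fun x y ↦ (hreach x).symm.trans (hreach y)

/-- Deleting all the universal vertices of `addUniversal G K`, and possibly others, leaves an
induced subgraph of `G`. -/
noncomputable def induceAddUniversalIso {T : Set (V ⊕ K)} (hT : Set.range Sum.inr ⊆ T) :
    G.induce (Sum.inl ⁻¹' T)ᶜ ≃g (addUniversal G K).induce Tᶜ where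
  toEquiv := Equiv.ofBijective (fun v ↦ ⟨.inl v, v.2⟩)
    ⟨fun _ _ h ↦ Subtype.ext <| Sum.inl_injective <| congrArg Subtype.val h, by
      rintro ⟨v | i, h⟩
      · exact ⟨⟨v, h⟩, rfl⟩
      · exact absurd (hT ⟨i, rfl⟩) h⟩
  map_rel_iff' := addUniversal_adj_inl_inl

theorem ncard_eq_ncard_preimage_inl_add [Finite V] [Finite K] {T : Set (V ⊕ K)}
    (hT : Set.range Sum.inr ⊆ T) : T.ncard = (Sum.inl ⁻¹' T : Set V).ncard + Nat.card K := by
  have hunion : T = Sum.inl '' (Sum.inl ⁻¹' T) ∪ Set.range Sum.inr := by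
    rw [Set.image_preimage_eq_inter_range, Set.inter_union_distrib_right,
      Set.range_inl_union_range_inr, Set.inter_univ, Set.union_eq_left.mpr hT]
  have hdisj : Disjoint (Sum.inl '' (Sum.inl ⁻¹' T)) (Set.range (Sum.inr : K → V ⊕ K)) :=
    Set.isCompl_range_inl_range_inr.disjoint.mono_left (Set.image_subset_range _ _)
  calc
    T.ncard = _ := congrArg Set.ncard hunion
    _ = _ := by
      rw [Set.ncard_union_eq hdisj, Set.ncard_image_of_injective _ Sum.inl_injective,
        Set.ncard_range_of_injective Sum.inr_injective]

/-- The Tutte–Berge formula: add `|V| - 2 * ν - 2` universal vertices and apply Tutte's theorem. -/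
theorem exists_card_add_ncard_le_add_ncard_oddComponents [Finite V] {ν : ℕ}
    (hν : ∀ N : G.Subgraph, N.IsMatching → N.edgeSet.ncard ≤ ν) :
    ∃ U : Set V, Nat.card V + U.ncard ≤ 2 * ν + (G.induce Uᶜ).oddComponents.ncard := by
  obtain hsmall | hlarge := Nat.lt_or_ge (Nat.card V) (2 * ν + 2)
  · refine ⟨∅, ?_⟩
    have hparity := (G.induce ∅ᶜ).odd_ncard_oddComponents
    have hcard : Nat.card (∅ᶜ : Set V) = Nat.card V := by simp [Nat.card_coe_set_eq]
    rw [Set.ncard_empty]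
    grind
  obtain ⟨k, hk⟩ := Nat.exists_eq_add_of_le hlarge
  have hno_perfect (M : (addUniversal G (Fin k)).Subgraph) : ¬ M.IsPerfectMatching := by
    intro hM
    obtain ⟨N, hN, hcard⟩ := exists_isMatching_card_le hM
    have := hν N hN
    rw [Nat.card_fin] at hcard
    omega
  have heven : Even (Nat.card (V ⊕ Fin k)) := by
    rw [Nat.card_sum, Nat.card_fin]
    exact ⟨ν + 1 + k, by omega⟩
  obtain ⟨T, hT⟩ := exists_ncard_add_two_le_ncard_oddComponents heven hno_perfect
  have hrange : Set.range Sum.inr ⊆ T := by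
    rintro _ ⟨i, rfl⟩
    by_contra hi
    have := ncard_oddComponents_le_one (preconnected_induce_addUniversal (G := G) (s := Tᶜ) hi)
    omega
  refine ⟨Sum.inl ⁻¹' T, ?_⟩
  rw [ncard_oddComponents_congr (induceAddUniversalIso hrange)]
  have := ncard_eq_ncard_preimage_inl_add hrange
  rw [Nat.card_fin] at this
  omega

theorem sum_ncard_supp [Finite V] [Fintype G.ConnectedComponent] :
    ∑ C : G.ConnectedComponent, C.supp.ncard = Nat.card V := by
  rw [← Set.ncard_univ, ← G.iUnion_connectedComponentSupp,
    Set.ncard_iUnion_of_finite (fun _ ↦ Set.toFinite _)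
      fun _ _ h ↦ pairwise_disjoint_supp_connectedComponent G h, finsum_eq_sum_of_fintype]

theorem ncard_setOf_ncard_supp_eq_one_le [Finite V] :
    {C : G.ConnectedComponent | C.supp.ncard = 1}.ncard ≤ {v | G.IsIsolated v}.ncard := by
  refine Set.ncard_le_ncard_of_injOn Quot.out (fun C hC w hw ↦ ?_)
    (Function.LeftInverse.injective Quot.out_eq).injOn
  obtain ⟨v, hv⟩ := Set.ncard_eq_one.mp hC
  have hout : C.out ∈ C.supp := C.out_eq
  have hw_mem : w ∈ C.supp := (C.mem_supp_congr_adj hw).mp hout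
  rw [hv, Set.mem_singleton_iff] at hout hw_mem
  exact hw.ne (hout.trans hw_mem.symm)

/-- Every odd component that is not a single vertex has at least three vertices. -/
theorem three_mul_ncard_oddComponents_le [Finite V] :
    3 * G.oddComponents.ncard ≤ Nat.card V + 2 * {v | G.IsIsolated v}.ncard := by
  classical
  have := Fintype.ofFinite G.ConnectedComponent
  have hC (C : G.ConnectedComponent) : (if Odd C.supp.ncard then 3 else 0) ≤
      C.supp.ncard + 2 * if C.supp.ncard = 1 then 1 else 0 := by
    grind
  calc 3 * G.oddComponents.ncard
      = ∑ C : G.ConnectedComponent, if Odd C.supp.ncard then 3 else 0 := by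
        rw [← Finset.sum_filter, Finset.sum_const, smul_eq_mul, mul_comm,
          Set.ncard_eq_toFinset_card', Set.toFinset_ofPred]
    _ ≤ ∑ C : G.ConnectedComponent, (C.supp.ncard + 2 * if C.supp.ncard = 1 then 1 else 0) :=
        Finset.sum_le_sum fun C _ ↦ hC C
    _ = Nat.card V + 2 * {C : G.ConnectedComponent | C.supp.ncard = 1}.ncard := by
        rw [Finset.sum_add_distrib, sum_ncard_supp, ← Finset.mul_sum, Finset.sum_boole,
          Set.ncard_eq_toFinset_card', Set.toFinset_ofPred, Nat.cast_id]
    _ ≤ _ := by grw [ncard_setOf_ncard_supp_eq_one_le]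

theorem ncard_isolated_induce_compl {U : Set V} :
    {v | (G.induce Uᶜ).IsIsolated v}.ncard = {v | v ∉ U ∧ G.neighborSet v ⊆ U}.ncard := by
  rw [← Set.ncard_image_of_injective _ Subtype.val_injective]
  congr 1
  ext v
  constructor
  · rintro ⟨⟨v, hv⟩, h, rfl⟩
    exact ⟨hv, fun w hw ↦ by_contra fun hwU ↦ h ⟨w, hwU⟩ hw⟩
  · rintro ⟨hv, h⟩
    exact ⟨⟨v, hv⟩, fun w hw ↦ w.2 (h hw), rfl⟩

theorem ncard_edgeSet_le_of_forall_isMatching [Finite V] (hG : G.IsPlanar) {ν : ℕ}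
    (hν : ∀ N : G.Subgraph, N.IsMatching → N.edgeSet.ncard ≤ ν) :
    G.edgeSet.ncard ≤ 3 * ν + 2 * Nat.card V := by
  obtain ⟨U, hU⟩ := exists_card_add_ncard_le_add_ncard_oddComponents hν
  have hodd := three_mul_ncard_oddComponents_le (G := G.induce Uᶜ)
  have hedges := ncard_edgeSet_add_ncard_neighborSet_subset_le hG U
  have hcard := Set.ncard_add_ncard_compl U
  rw [ncard_isolated_induce_compl, Nat.card_coe_set_eq] at hodd
  omega

end TutteBerge

end PlanarMatching

/-- Let `G'` be a graph on the vertex set `V'` containing a perfect matching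
`M`, let `E*` be an edge set on `V'` (of size `OPT`) such that the graph
`(V', E* \ M)` is planar, and let `M''` be a maximum matching of the graph
`(V', E' \ M)` for some edge set `E' ⊇ E*`. Then
`OPT ≤ 3|M''| + 5|M| ≤ 5|M ∪ M''|`. -/
theorem stmt_11 {V' : Type*} [Fintype V'] (G' : SimpleGraph V')
    (M : G'.Subgraph) (hM : M.IsPerfectMatching)
    (Estar E' : Set (Sym2 V'))
    (hloopless : ∀ e ∈ Estar, ¬ e.IsDiag)
    (hplanar : (SimpleGraph.fromEdgeSet (Estar \ M.edgeSet)).IsPlanar)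
    (hE' : Estar ⊆ E')
    (M'' : (SimpleGraph.fromEdgeSet (E' \ M.edgeSet)).Subgraph)
    (hM'' : M''.IsMatching)
    (hmax : ∀ N : (SimpleGraph.fromEdgeSet (E' \ M.edgeSet)).Subgraph,
      N.IsMatching → N.edgeSet.ncard ≤ M''.edgeSet.ncard) :
    (Estar.ncard : ℝ) ≤ 3 * M''.edgeSet.ncard + 5 * M.edgeSet.ncard ∧
    (3 * M''.edgeSet.ncard + 5 * M.edgeSet.ncard : ℝ) ≤
      5 * ((M.edgeSet ∪ M''.edgeSet).ncard : ℝ) := by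
  have hcard : Nat.card V' = 2 * M.edgeSet.ncard := by
    rw [← PlanarMatching.ncard_verts_eq_two_mul hM.1, hM.2.verts_eq_univ, Set.ncard_univ]
  have hle : fromEdgeSet (Estar \ M.edgeSet) ≤ fromEdgeSet (E' \ M.edgeSet) :=
    fromEdgeSet_mono (Set.sdiff_subset_sdiff_left hE')
  have hplanar_bound := PlanarMatching.ncard_edgeSet_le_of_forall_isMatching hplanar fun N hN ↦ by
    simpa [Subgraph.edgeSet_map] using hmax _ (hN.map_ofLE hle)
  have hedgeSet : (fromEdgeSet (Estar \ M.edgeSet)).edgeSet = Estar \ M.edgeSet := by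
    rw [edgeSet_fromEdgeSet, sdiff_eq_left, Set.disjoint_left]
    exact fun e he ↦ hloopless e he.1
  have hEstar := Set.ncard_le_ncard_sdiff_add_ncard Estar M.edgeSet
  have hdisj : Disjoint M.edgeSet M''.edgeSet :=
    Set.disjoint_right.mpr fun e he ↦ (edgeSet_fromEdgeSet _ ▸ M''.edgeSet_subset he).1.2
  rw [hedgeSet, hcard] at hplanar_bound
  rw [Set.ncard_union_eq hdisj]
  constructor <;> norm_cast <;> omega
end

section
/- Every connected planar graph with n ≥ 10 vertices and minimum degree at least 3 contains a matching of size at least ⌈(n + 2)/3⌉. -/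
open SimpleGraph

/-!
By the Tutte–Berge formula it suffices that `G - s` has at most `|s| + (n - 4) / 3` odd components
for every set `s` of vertices. If `s` is empty, odd components have at least five vertices.
Otherwise odd components other than isolated vertices have at least three vertices, so everything
depends on bounding the number of isolated vertices of `G - s` by `2|s| - 2`. Each of them has at
least three neighbours, all in `s`, and excluding a `K₃,₃` minor is enough for the bound.

Indeed, attach each isolated vertex to a triple of disjoint connected branch sets, initially three
single vertices of `s`, and suppose there are `2k - 1` triples on `k` branch sets. Some branch set
`x` lies in at most five of them. If one or two triples contain both `x` and `y`, contract `x`, `y`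
and the isolated vertex of such a triple to a single branch set: this destroys at most two triples,
and induction applies. Otherwise every vertex of the link of `x`, a multigraph with at most five
edges, has degree at least three. Such a link contains a triple edge or a double edge whose ends
have a common neighbour, and either configuration yields a `K₃,₃` minor.
-/

section OddComponents

variable {V W : Type*} (G : SimpleGraph V)

lemma sum_ncard_supp [Finite V] [Fintype G.ConnectedComponent] :
    ∑ c : G.ConnectedComponent, c.supp.ncard = Nat.card V :=
  Nat.card_sigma.symm.trans (Nat.card_congr (Equiv.sigmaFiberEquiv G.connectedComponentMk))

lemma mul_ncard_oddComponents_le [Finite V] {k : ℕ}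
    (hk : ∀ c ∈ G.oddComponents, k ≤ c.supp.ncard) :
    k * G.oddComponents.ncard ≤ Nat.card V := by
  classical
  have := Fintype.ofFinite G.ConnectedComponent
  calc k * G.oddComponents.ncard
      = ∑ c : G.ConnectedComponent with Odd c.supp.ncard, k := by
        rw [Finset.sum_const, smul_eq_mul, mul_comm, ← Set.ncard_coe_finset, Finset.coe_filter_univ]
    _ ≤ ∑ c : G.ConnectedComponent with Odd c.supp.ncard, c.supp.ncard :=
        Finset.sum_le_sum fun c hc ↦ hk c (Finset.mem_filter.mp hc).2
    _ ≤ ∑ c : G.ConnectedComponent, c.supp.ncard :=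
        Finset.sum_le_sum_of_subset (Finset.filter_subset _ _)
    _ = Nat.card V := sum_ncard_supp G

variable {G}

lemma ncard_oddComponents_congr {H : SimpleGraph W} (φ : G ≃g H) :
    G.oddComponents.ncard = H.oddComponents.ncard := by
  refine Nat.card_congr (φ.connectedComponentEquiv.subtypeEquiv fun c ↦ ?_)
  simp only [oddComponents, Set.mem_ofPred_eq,
    ← Nat.card_coe_set_eq, Nat.card_congr (c.isoEquivSupp φ)]

lemma ncard_oddComponents_le_one (hG : G.Preconnected) : G.oddComponents.ncard ≤ 1 :=
  have := hG.subsingleton_connectedComponent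
  Set.ncard_le_one_of_subsingleton _

lemma degree_lt_ncard_supp [Finite V] {c : G.ConnectedComponent} {v : V} (hv : v ∈ c.supp)
    [Fintype (G.neighborSet v)] : G.degree v < c.supp.ncard := by
  rw [← card_neighborSet_eq_degree, ← Nat.card_eq_fintype_card, Nat.card_coe_set_eq]
  exact Set.ncard_lt_ncard ⟨fun w hw ↦ c.mem_supp_of_adj_mem_supp hv hw,
    fun h ↦ G.loopless.irrefl v (h hv)⟩

lemma isIsolated_of_ncard_supp_eq_one {c : G.ConnectedComponent} (hc : c.supp.ncard = 1) {v : V}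
    (hv : v ∈ c.supp) : G.IsIsolated v := by
  obtain ⟨u, hu⟩ := Set.ncard_eq_one.mp hc
  intro w hvw
  have hw := c.mem_supp_of_adj_mem_supp hv hvw
  rw [hu, Set.mem_singleton_iff] at hv hw
  exact hvw.ne (hv.trans hw.symm)

lemma ncard_components_ncard_supp_eq_one_le [Finite V] :
    {c : G.ConnectedComponent | c.supp.ncard = 1}.ncard ≤ {v | G.IsIsolated v}.ncard := by
  choose f hf using fun c : G.ConnectedComponent ↦ c.nonempty_supp
  exact Set.ncard_le_ncard_of_injOn f (fun c hc ↦ isIsolated_of_ncard_supp_eq_one hc (hf c))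
    fun c _ d _ hcd ↦ ConnectedComponent.eq_of_common_vertex (hf c) (hcd ▸ hf d)

lemma three_mul_ncard_oddComponents_le [Finite V] :
    3 * G.oddComponents.ncard ≤ Nat.card V + 2 * {v | G.IsIsolated v}.ncard := by
  classical
  have := Fintype.ofFinite G.ConnectedComponent
  calc 3 * G.oddComponents.ncard
      = ∑ c : G.ConnectedComponent, if Odd c.supp.ncard then 3 else 0 := by
        rw [← Finset.sum_filter, Finset.sum_const, smul_eq_mul, mul_comm, ← Set.ncard_coe_finset,
          Finset.coe_filter_univ]
    _ ≤ ∑ c : G.ConnectedComponent, (c.supp.ncard + if c.supp.ncard = 1 then 2 else 0) :=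
        Finset.sum_le_sum fun c _ ↦ by grind
    _ = Nat.card V + 2 * {c : G.ConnectedComponent | c.supp.ncard = 1}.ncard := by
        rw [Finset.sum_add_distrib, sum_ncard_supp, ← Finset.sum_filter, Finset.sum_const,
          smul_eq_mul, mul_comm 2, ← Set.ncard_coe_finset, Finset.coe_filter_univ]
    _ ≤ Nat.card V + 2 * {v | G.IsIsolated v}.ncard := by
        gcongr
        exact ncard_components_ncard_supp_eq_one_le

end OddComponents

section TutteBerge

variable {V W : Type*} {G : SimpleGraph V}

lemma ncard_verts_of_isMatching [Finite V] {M : G.Subgraph} (hM : M.IsMatching) :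
    M.verts.ncard = 2 * M.edgeSet.ncard := by
  classical
  have := Fintype.ofFinite V
  have hdeg (v : M.verts) [Fintype (M.coe.neighborSet v)] : M.coe.degree v = 1 := by
    obtain ⟨w, hvw, huniq⟩ := hM v.2
    exact degree_eq_one_iff_existsUnique_adj.mpr
      ⟨⟨w, M.edge_vert hvw.symm⟩, hvw, fun w' hw' ↦ Subtype.ext (huniq w' hw')⟩
  rw [← M.image_coe_edgeSet_coe,
    Set.ncard_image_of_injective _ (Sym2.map.injective Subtype.val_injective),
    ← coe_edgeFinset, Set.ncard_coe_finset, ← M.coe.sum_degrees_eq_twice_card_edges]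
  simp [hdeg, Set.ncard_eq_toFinset_card']

/-- The join of `G` with the complete graph on `W`. Its universal vertices `Sum.inr w` turn a
deficiency of `|W|` in Tutte's condition for `G` into Tutte's condition itself. -/
def joinCompleteGraph (G : SimpleGraph V) (W : Type*) : SimpleGraph (V ⊕ W) :=
  (G ⊕g completeGraph W) ⊔ completeBipartiteGraph V W

lemma joinCompleteGraph_adj_inl {v v' : V} :
    (joinCompleteGraph G W).Adj (.inl v) (.inl v') ↔ G.Adj v v' := by
  simp [joinCompleteGraph]

lemma joinCompleteGraph_adj_inr {x : V ⊕ W} {w : W} (hx : x ≠ .inr w) :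
    (joinCompleteGraph G W).Adj x (.inr w) := by
  cases x <;> simp_all [joinCompleteGraph]

lemma preconnected_induce_joinCompleteGraph {s : Set (V ⊕ W)} {w : W} (hw : .inr w ∈ s) :
    ((joinCompleteGraph G W).induce s).Preconnected := by
  have reachable_apex (x : s) : ((joinCompleteGraph G W).induce s).Reachable x ⟨.inr w, hw⟩ := by
    by_cases hx : x = ⟨.inr w, hw⟩
    · rw [hx]
    · exact Adj.reachable (joinCompleteGraph_adj_inr fun h ↦ hx (Subtype.ext h))
  exact fun x y ↦ (reachable_apex x).trans (reachable_apex y).symm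

/-- Deleting all of `W` from the join of `G` with the complete graph on `W`, together with a set
of vertices of `G`, leaves an induced subgraph of `G`. -/
noncomputable def induceInlIso (G : SimpleGraph V) (W : Type*) (s : Set V) :
    G.induce s ≃g (joinCompleteGraph G W).induce (Sum.inl '' s) where
  toEquiv := Equiv.Set.image Sum.inl s Sum.inl_injective
  map_rel_iff' := joinCompleteGraph_adj_inl

lemma ncard_oddComponents_joinCompleteGraph_le [Finite V] [Finite W]
    (heven : Even (Nat.card (V ⊕ W)))
    (hG : ∀ s : Set V, (G.induce sᶜ).oddComponents.ncard ≤ s.ncard + Nat.card W)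
    (u : Set (V ⊕ W)) :
    ((joinCompleteGraph G W).induce uᶜ).oddComponents.ncard ≤ u.ncard := by
  by_cases hu : ∃ w, .inr w ∉ u
  · obtain ⟨w, hw⟩ := hu
    have hle := ncard_oddComponents_le_one
      (preconnected_induce_joinCompleteGraph (G := G) (s := uᶜ) hw)
    have hparity := ((joinCompleteGraph G W).induce uᶜ).odd_ncard_oddComponents
    have hcard := Set.ncard_add_ncard_compl u
    rw [Nat.card_coe_set_eq] at hparity
    grind
  · push Not at hu
    obtain ⟨s, rfl⟩ : ∃ s : Set V, u = Sum.inl '' s ∪ Set.range Sum.inr :=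
      ⟨Sum.inl ⁻¹' u, by ext (v | w) <;> simp [hu]⟩
    have hcompl : (Sum.inl '' s ∪ Set.range Sum.inr : Set (V ⊕ W))ᶜ = Sum.inl '' sᶜ := by
      ext (v | w) <;> simp
    have hcard :
        (Sum.inl '' s ∪ Set.range Sum.inr : Set (V ⊕ W)).ncard = s.ncard + Nat.card W := by
      rw [Set.ncard_union_eq, Set.ncard_image_of_injective _ Sum.inl_injective,
        ← Nat.card_coe_set_eq (Set.range _), Nat.card_range_of_injective Sum.inr_injective]
      exact Set.isCompl_range_inl_range_inr.disjoint.mono_left (Set.image_subset_range _ _)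
    rw [hcompl, hcard, ← ncard_oddComponents_congr (induceInlIso G W sᶜ)]
    exact hG s

lemma exists_isMatching_of_isPerfectMatching_joinCompleteGraph [Finite V] [Finite W]
    {M : (joinCompleteGraph G W).Subgraph} (hM : M.IsPerfectMatching) :
    ∃ N : G.Subgraph, N.IsMatching ∧ Nat.card V ≤ 2 * N.edgeSet.ncard + Nat.card W := by
  let N : G.Subgraph :=
    { verts := {v | ∃ v', M.Adj (.inl v) (.inl v')}
      Adj v v' := M.Adj (.inl v) (.inl v')
      adj_sub h := joinCompleteGraph_adj_inl.mp (M.adj_sub h)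
      edge_vert {_ v'} h := ⟨v', h⟩
      symm := ⟨fun _ _ h ↦ Subgraph.Adj.symm h⟩ }
  have hN : N.IsMatching := fun v ⟨v', h⟩ ↦
    ⟨v', h, fun _ h' ↦ Sum.inl_injective (hM.1.eq_of_adj_left h' h)⟩
  choose partner hpartner using fun v : V ↦ (Subgraph.isPerfectMatching_iff.mp hM (.inl v)).exists
  have hcompl : N.vertsᶜ.ncard ≤ Nat.card W := by
    rw [← Nat.card_range_of_injective (Sum.inr_injective (α := V)), Nat.card_coe_set_eq]
    refine Set.ncard_le_ncard_of_injOn partner (fun v hv ↦ ?_) fun v _ v' _ h ↦ ?_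
    · rcases hv' : partner v with v' | w
      · exact (hv ⟨v', hv' ▸ hpartner v⟩).elim
      · exact ⟨w, rfl⟩
    · exact Sum.inl_injective (hM.1.eq_of_adj_right (hpartner v) (h ▸ hpartner v'))
  refine ⟨N, hN, ?_⟩
  rw [← ncard_verts_of_isMatching hN, ← Set.ncard_add_ncard_compl N.verts]
  gcongr

lemma exists_isMatching_of_ncard_oddComponents_le_of_even [Finite V] {d : ℕ}
    (heven : Even (Nat.card V + d))
    (hG : ∀ s : Set V, (G.induce sᶜ).oddComponents.ncard ≤ s.ncard + d) :
    ∃ M : G.Subgraph, M.IsMatching ∧ Nat.card V ≤ 2 * M.edgeSet.ncard + d := by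
  have hno_violator (u : Set (V ⊕ Fin d)) : ¬ (joinCompleteGraph G (Fin d)).IsTutteViolator u := by
    have hverts : (⊤ : (joinCompleteGraph G (Fin d)).Subgraph).verts \ u = uᶜ :=
      Set.compl_eq_univ_sdiff u |>.symm
    rw [IsTutteViolator, Subgraph.deleteVerts, hverts, ← induce_eq_coe_induce_top, not_lt]
    exact ncard_oddComponents_joinCompleteGraph_le (by simpa using heven) (by simpa using hG) u
  obtain ⟨M, hM⟩ := tutte.mpr hno_violator
  simpa using exists_isMatching_of_isPerfectMatching_joinCompleteGraph hM

theorem exists_isMatching_of_ncard_oddComponents_le [Finite V] {d : ℕ}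
    (hG : ∀ s : Set V, (G.induce sᶜ).oddComponents.ncard ≤ s.ncard + d) :
    ∃ M : G.Subgraph, M.IsMatching ∧ Nat.card V ≤ 2 * M.edgeSet.ncard + d := by
  rcases Nat.even_or_odd (Nat.card V + d) with heven | hodd
  · exact exists_isMatching_of_ncard_oddComponents_le_of_even heven hG
  -- By parity the bound is never attained, so `d` can be lowered by one.
  have hlt (s : Set V) : (G.induce sᶜ).oddComponents.ncard < s.ncard + d := by
    have hparity := (G.induce sᶜ).odd_ncard_oddComponents
    have hcard := Set.ncard_add_ncard_compl s
    rw [Nat.card_coe_set_eq] at hparity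
    grind
  have hd : d ≠ 0 := by
    have := hlt ∅
    rw [Set.ncard_empty] at this
    lia
  obtain ⟨e, rfl⟩ := Nat.exists_eq_succ_of_ne_zero hd
  obtain ⟨M, hM, hcard⟩ := exists_isMatching_of_ncard_oddComponents_le_of_even
    (G := G) (d := e) (by grind) (by grind)
  exact ⟨M, hM, by lia⟩

end TutteBerge

-- Read `D` as the edge set of a multigraph and `P c` as the set of ends of the edge `c`.
lemma exists_parallel_edges_of_card_le_five {α ι : Type*} [DecidableEq ι] {D : Finset α}
    {P : α → Finset ι} (hne : D.Nonempty) (hD : D.card ≤ 5) (hP : ∀ c ∈ D, (P c).card = 2)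
    (hdeg : ∀ c ∈ D, ∀ y ∈ P c, 3 ≤ {e ∈ D | y ∈ P e}.card) :
    ∃ a ∈ D, ∃ b ∈ D, a ≠ b ∧ P a = P b ∧ ((∃ c ∈ D, c ≠ a ∧ c ≠ b ∧ P a = P c) ∨
      ∃ c ∈ D, ∃ d ∈ D, ∃ w, w ∉ P a ∧ w ∈ P c ∧ w ∈ P d ∧ P a ⊆ P c ∪ P d) := by
  classical
  let L := D.biUnion P
  have hsub {c : α} (hc : c ∈ D) : P c ⊆ L := Finset.subset_biUnion_of_mem P hc
  have hcount : L.card * 3 ≤ D.card * 2 := by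
    refine Finset.card_mul_le_card_mul (fun y c ↦ y ∈ P c) (fun y hy ↦ ?_) fun c hc ↦ ?_
    · obtain ⟨c, hc, hyc⟩ := Finset.mem_biUnion.mp hy
      exact hdeg c hc y hyc
    · rw [← hP c hc]
      exact Finset.card_le_card fun y hy ↦ (Finset.mem_filter.mp hy).2
  have hpigeon : (L.powersetCard 2).card < D.card := by
    rw [Finset.card_powersetCard, Nat.choose_two_right]
    have := hne.card_pos
    have : L.card ≤ 3 := by lia
    interval_cases L.card <;> lia
  obtain ⟨a, ha, b, hb, hab, hPab⟩ := Finset.exists_ne_map_eq_of_card_lt_of_maps_to hpigeon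
    fun c hc ↦ Finset.mem_coe.mpr (Finset.mem_powersetCard.mpr ⟨hsub hc, hP c hc⟩)
  refine ⟨a, ha, b, hb, hab, hPab, or_iff_not_imp_left.mpr fun hno ↦ ?_⟩
  push Not at hno
  obtain ⟨y, z, -, hPa⟩ := Finset.card_eq_two.mp (hP a ha)
  have hthird {u : ι} (hu : u ∈ P a) :
      ∃ c ∈ D, u ∈ P c ∧ ∃ w ∈ P c, w ∉ P a := by
    obtain ⟨c, hc, hcab⟩ := Finset.exists_mem_notMem_of_card_lt_card
      (s := {a, b}) (t := {e ∈ D | u ∈ P e}) (by grind [hdeg a ha u hu])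
    obtain ⟨hc, huc⟩ := Finset.mem_filter.mp hc
    have hPac : P a ≠ P c := hno c hc (by grind) (by grind)
    exact ⟨c, hc, huc, Finset.not_subset.mp fun h ↦
      hPac (Finset.eq_of_subset_of_card_le h (by grind)).symm⟩
  obtain ⟨c, hc, hyc, w, hwc, hwa⟩ := hthird (u := y) (by simp [hPa])
  obtain ⟨d, hd, hzd, w', hwd, hwa'⟩ := hthird (u := z) (by simp [hPa])
  have hLa : insert w (P a) = L :=
    Finset.eq_of_subset_of_card_le (Finset.insert_subset (hsub hc hwc) (hsub ha)) (by grind)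
  obtain rfl : w' = w := by grind
  exact ⟨c, hc, d, hd, w', hwa, hwc, hwd, by grind⟩

section CompleteBipartiteMinor

variable {V ι : Type*} {G : SimpleGraph V}

lemma hasMinor_completeBipartiteGraph_of_forall_adj {α β : Type*} {P : α → Set V} {Q : β → Set V}
    (hP : ∀ i, (G.induce (P i)).Connected) (hQ : ∀ j, (G.induce (Q j)).Connected)
    (hPP : Pairwise (Function.onFun Disjoint P)) (hQQ : Pairwise (Function.onFun Disjoint Q))
    (hPQ : ∀ i j, Disjoint (P i) (Q j)) (hadj : ∀ i j, ∃ v ∈ P i, ∃ w ∈ Q j, G.Adj v w) :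
    G.HasMinor (completeBipartiteGraph α β) := by
  have hconn : ∀ k, (G.induce (Sum.elim P Q k)).Connected := Sum.rec hP hQ
  refine ⟨Sum.elim P Q, fun k ↦ Set.nonempty_coe_sort.mp (hconn k).nonempty, hconn, ?_, ?_⟩
  · rintro (i | j) (i' | j') hne
    exacts [hPP (ne_of_apply_ne _ hne), hPQ i j', (hPQ i' j).symm, hQQ (ne_of_apply_ne _ hne)]
  · rintro (i | j) (i' | j') h
    · simp at h
    · exact hadj i j'
    · obtain ⟨v, hv, w, hw, hvw⟩ := hadj i' j
      exact ⟨w, hw, v, hv, hvw.symm⟩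
    · simp at h

/-- A model in `G` of a system of triples: pairwise disjoint connected branch sets `B i`, for
`i ∈ I`, and vertices `a ∈ A` outside of them, each attached to the three branch sets with index in
`T a`. Unlike vertices together with their neighbourhoods, these models can be contracted, which
makes an induction on `I` possible. Only the values of `B` on `I` and of `T` on `A` matter. -/
structure TripleModel (G : SimpleGraph V) (I : Finset ι) (A : Finset V) (B : ι → Set V)
    (T : V → Finset ι) : Prop where
  connected : ∀ i ∈ I, (G.induce (B i)).Connected
  pairwiseDisjoint : (I : Set ι).PairwiseDisjoint B
  notMem : ∀ a ∈ A, ∀ i ∈ I, a ∉ B i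
  subset : ∀ a ∈ A, T a ⊆ I
  card_eq : ∀ a ∈ A, (T a).card = 3
  exists_adj : ∀ a ∈ A, ∀ i ∈ T a, ∃ v ∈ B i, G.Adj v a

namespace TripleModel

variable {I : Finset ι} {A : Finset V} {B : ι → Set V} {T : V → Finset ι}

lemma mono_right (S : TripleModel G I A B T) {A' : Finset V} (h : A' ⊆ A) :
    TripleModel G I A' B T where
  connected := S.connected
  pairwiseDisjoint := S.pairwiseDisjoint
  notMem a ha := S.notMem a (h ha)
  subset a ha := S.subset a (h ha)
  card_eq a ha := S.card_eq a (h ha)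
  exists_adj a ha := S.exists_adj a (h ha)

lemma mono_left (S : TripleModel G I A B T) {J : Finset ι} (hJ : J ⊆ I)
    (hT : ∀ a ∈ A, T a ⊆ J) : TripleModel G J A B T where
  connected i hi := S.connected i (hJ hi)
  pairwiseDisjoint := S.pairwiseDisjoint.subset (Finset.coe_subset.mpr hJ)
  notMem a ha i hi := S.notMem a ha i (hJ hi)
  subset := hT
  card_eq := S.card_eq
  exists_adj := S.exists_adj

lemma hasMinor_of_connected (S : TripleModel G I A B T) {a b : V} (ha : a ∈ A) (hb : b ∈ A)
    (hab : a ≠ b) (hT : T a = T b) {C : Set V} (hC : (G.induce C).Connected) (haC : a ∉ C)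
    (hbC : b ∉ C) (hdisj : ∀ i ∈ T a, Disjoint (B i) C)
    (hadj : ∀ i ∈ T a, ∃ v ∈ B i, ∃ w ∈ C, G.Adj v w) :
    G.HasMinor (completeBipartiteGraph (Fin 3) (Fin 3)) := by
  let e : Fin 3 ≃ T a := (Finset.equivFinOfCardEq (S.card_eq a ha)).symm
  have he (k : Fin 3) : (e k : ι) ∈ I := S.subset a ha (e k).2
  refine hasMinor_completeBipartiteGraph_of_forall_adj (P := fun k ↦ B (e k)) (Q := ![{a}, {b}, C])
    (fun k ↦ S.connected _ (he k)) ?_ (fun k l hkl ↦ S.pairwiseDisjoint (he k) (he l) ?_) ?_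
    (fun k ↦ ?_) (fun k ↦ ?_)
  · simp [Fin.forall_fin_succ, hC]
  · exact fun h ↦ hkl (e.injective (Subtype.ext h))
  · intro k l hkl
    fin_cases k <;> fin_cases l <;> simp_all [Function.onFun, eq_comm]
  · simpa [Fin.forall_fin_succ] using
      ⟨S.notMem a ha _ (he k), S.notMem b hb _ (he k), hdisj _ (e k).2⟩
  · simpa [Fin.forall_fin_succ] using
      ⟨S.exists_adj a ha _ (e k).2, S.exists_adj b hb _ (hT ▸ (e k).2), hadj _ (e k).2⟩

lemma hasMinor_of_three_eq (S : TripleModel G I A B T) {a b c : V} (ha : a ∈ A) (hb : b ∈ A)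
    (hc : c ∈ A) (hab : a ≠ b) (hca : c ≠ a) (hcb : c ≠ b) (hTb : T a = T b) (hTc : T a = T c) :
    G.HasMinor (completeBipartiteGraph (Fin 3) (Fin 3)) := by
  refine S.hasMinor_of_connected ha hb hab hTb (C := {c}) (by simp) hca.symm hcb.symm
    (fun i hi ↦ ?_) (fun i hi ↦ ?_)
  · exact Set.disjoint_singleton_right.mpr (S.notMem c hc i (S.subset a ha hi))
  · obtain ⟨v, hv, hvc⟩ := S.exists_adj c hc i (hTc ▸ hi)
    exact ⟨v, hv, c, rfl, hvc⟩

lemma connected_induce_insert (S : TripleModel G I A B T) {a : V} {i : ι} (ha : a ∈ A)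
    (hi : i ∈ T a) : (G.induce (insert a (B i))).Connected := by
  obtain ⟨v, hv, hva⟩ := S.exists_adj a ha i hi
  exact connected_induce_union (s := {a}) (by simp [Preconnected.of_subsingleton])
    (S.connected i (S.subset a ha hi)).preconnected rfl hv hva.symm

lemma connected_induce_insert_union (S : TripleModel G I A B T) {a : V} {i j : ι} (ha : a ∈ A)
    (hi : i ∈ T a) (hj : j ∈ T a) : (G.induce (insert a (B i ∪ B j))).Connected := by
  rw [← Set.insert_union]
  obtain ⟨v, hv, hva⟩ := S.exists_adj a ha j hj
  exact connected_induce_union (S.connected_induce_insert ha hi).preconnected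
    (S.connected j (S.subset a ha hj)).preconnected (Set.mem_insert _ _) hv hva.symm

-- The third branch set on the side of `a` and `b` joins `c` and `d` through `B w`.
lemma hasMinor_of_two_eq [DecidableEq ι] (S : TripleModel G I A B T) {a b c d : V} {w : ι}
    (ha : a ∈ A) (hb : b ∈ A) (hc : c ∈ A) (hd : d ∈ A) (hab : a ≠ b) (hT : T a = T b)
    (hwa : w ∉ T a) (hwc : w ∈ T c) (hwd : w ∈ T d) (hcover : T a ⊆ T c ∪ T d) :
    G.HasMinor (completeBipartiteGraph (Fin 3) (Fin 3)) := by
  have hwI : w ∈ I := S.subset c hc hwc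
  have hwb : w ∉ T b := hT ▸ hwa
  have hconn : (G.induce (insert c (B w) ∪ insert d (B w))).Connected :=
    induce_union_connected (S.connected_induce_insert hc hwc).preconnected
      (S.connected_induce_insert hd hwd).preconnected (by
        obtain ⟨⟨v, hv⟩⟩ := (S.connected w hwI).nonempty
        exact ⟨v, .inr hv, .inr hv⟩)
  have hnotMem {e : V} (he : e ∈ A) (hwe : w ∉ T e) : e ∉ insert c (B w) ∪ insert d (B w) := by
    have := S.notMem e he w hwI
    grind
  refine S.hasMinor_of_connected ha hb hab hT hconn (hnotMem ha hwa) (hnotMem hb hwb)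
    (fun i hi ↦ ?_) (fun i hi ↦ ?_)
  · have hiI := S.subset a ha hi
    have hBw : Disjoint (B i) (B w) := S.pairwiseDisjoint hiI hwI (by rintro rfl; exact hwa hi)
    simp [S.notMem c hc i hiI, S.notMem d hd i hiI, hBw]
  · rcases Finset.mem_union.mp (hcover hi) with hic | hid
    · obtain ⟨v, hv, hvc⟩ := S.exists_adj c hc i hic
      exact ⟨v, hv, c, .inl (Set.mem_insert _ _), hvc⟩
    · obtain ⟨v, hv, hvd⟩ := S.exists_adj d hd i hid
      exact ⟨v, hv, d, .inr (Set.mem_insert _ _), hvd⟩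

lemma disjoint_insert_union (S : TripleModel G I A B T) {a : V} {i x y : ι} (ha : a ∈ A)
    (hx : x ∈ T a) (hy : y ∈ T a) (hi : i ∈ I) (hix : i ≠ x) (hiy : i ≠ y) :
    Disjoint (insert a (B x ∪ B y)) (B i) := by
  simp [S.notMem a ha i hi, S.pairwiseDisjoint (S.subset a ha hx) hi hix.symm,
    S.pairwiseDisjoint (S.subset a ha hy) hi hiy.symm]

lemma merge [DecidableEq ι] (S : TripleModel G I A B T) {a : V} {x y : ι} (ha : a ∈ A)
    (hx : x ∈ T a) (hy : y ∈ T a) (hxy : x ≠ y) :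
    TripleModel G (I.erase x) {c ∈ A | ¬ (x ∈ T c ∧ y ∈ T c)}
      (Function.update B y (insert a (B x ∪ B y)))
      (fun c ↦ (T c).image (Function.update id x y)) where
  connected i hi := by
    rcases eq_or_ne i y with rfl | hiy
    · rw [Function.update_self]
      exact S.connected_induce_insert_union ha hx hy
    · rw [Function.update_of_ne hiy]
      exact S.connected i (Finset.mem_of_mem_erase hi)
  pairwiseDisjoint := by
    intro i hi j hj hij
    obtain ⟨hix, hi⟩ := Finset.mem_erase.mp hi
    obtain ⟨hjx, hj⟩ := Finset.mem_erase.mp hj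
    rcases eq_or_ne i y with rfl | hiy
    · simpa [Function.onFun, hij.symm] using
        S.disjoint_insert_union ha hx hy hj hjx hij.symm
    rcases eq_or_ne j y with rfl | hjy
    · simpa [Function.onFun, hij] using
        (S.disjoint_insert_union ha hx hy hi hix hij).symm
    · simpa [Function.onFun, hiy, hjy] using S.pairwiseDisjoint hi hj hij
  notMem c hc i hi := by
    obtain ⟨hc, hxyc⟩ := Finset.mem_filter.mp hc
    have := S.notMem c hc
    have := S.subset a ha
    grind
  subset c hc := by
    have := S.subset c (Finset.mem_of_mem_filter c hc)
    have := S.subset a ha hy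
    grind
  card_eq c hc := by
    obtain ⟨hc, hxyc⟩ := Finset.mem_filter.mp hc
    rw [Finset.card_image_of_injOn, S.card_eq c hc]
    intro i hi j hj hij
    grind
  exists_adj c hc i hi := by
    obtain ⟨j, hj, rfl⟩ := Finset.mem_image.mp hi
    obtain ⟨v, hv, hvc⟩ := S.exists_adj c (Finset.mem_of_mem_filter c hc) j hj
    refine ⟨v, ?_, hvc⟩
    grind

lemma exists_card_filter_mem_le_five [DecidableEq ι] (S : TripleModel G I A B T)
    (h : A.card < 2 * I.card) : ∃ x ∈ I, {a ∈ A | x ∈ T a}.card ≤ 5 := by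
  by_contra! hdeg
  have hcount : I.card * 6 ≤ A.card * 3 := by
    refine Finset.card_mul_le_card_mul (fun x a ↦ x ∈ T a) hdeg fun a ha ↦ ?_
    rw [← S.card_eq a ha]
    exact Finset.card_le_card fun x hx ↦ (Finset.mem_filter.mp hx).2
  lia

lemma hasMinor_of_card_filter_le_five [DecidableEq ι] (S : TripleModel G I A B T) {x : ι}
    (hx : ∃ a ∈ A, x ∈ T a) (hdeg : {a ∈ A | x ∈ T a}.card ≤ 5)
    (hcodeg : ∀ a ∈ A, x ∈ T a → ∀ y ∈ T a, x ≠ y → 3 ≤ {c ∈ A | x ∈ T c ∧ y ∈ T c}.card) :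
    G.HasMinor (completeBipartiteGraph (Fin 3) (Fin 3)) := by
  obtain ⟨a, ha, b, hb, hab, hTab, h⟩ := exists_parallel_edges_of_card_le_five
    (D := {a ∈ A | x ∈ T a}) (P := fun a ↦ (T a).erase x) (Finset.filter_nonempty_iff.mpr hx) hdeg
    (fun c hc ↦ by grind [S.card_eq c]) (fun c hc y hy ↦ by
      obtain ⟨hc, hxc⟩ := Finset.mem_filter.mp hc
      obtain ⟨hyx, hyc⟩ := Finset.mem_erase.mp hy
      simpa [Finset.filter_filter, hyx] using hcodeg c hc hxc y hyc hyx.symm)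
  rw [Finset.mem_filter] at ha hb
  have hT {c : V} (hxc : x ∈ T c) (h : (T a).erase x = (T c).erase x) : T a = T c := by
    rw [← Finset.insert_erase ha.2, h, Finset.insert_erase hxc]
  rcases h with ⟨c, hc, hca, hcb, hTac⟩ | ⟨c, hc, d, hd, w, hwa, hwc, hwd, hcover⟩
  · rw [Finset.mem_filter] at hc
    exact S.hasMinor_of_three_eq ha.1 hb.1 hc.1 hab hca hcb (hT hb.2 hTab) (hT hc.2 hTac)
  · rw [Finset.mem_filter] at hc hd
    obtain ⟨hwx, hwc⟩ := Finset.mem_erase.mp hwc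
    refine S.hasMinor_of_two_eq ha.1 hb.1 hc.1 hd.1 hab (hT hb.2 hTab)
      (fun h ↦ hwa (Finset.mem_erase.mpr ⟨hwx, h⟩)) hwc (Finset.mem_of_mem_erase hwd) fun i hi ↦ ?_
    rcases eq_or_ne i x with rfl | hix
    · exact Finset.mem_union_left _ hc.2
    · exact Finset.union_subset_union (Finset.erase_subset _ _) (Finset.erase_subset _ _)
        (hcover (Finset.mem_erase.mpr ⟨hix, hi⟩))

theorem hasMinor_of_two_mul_card_le (S : TripleModel G I A B T)
    (hI : I.Nonempty) (h : 2 * I.card ≤ A.card + 1) :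
    G.HasMinor (completeBipartiteGraph (Fin 3) (Fin 3)) := by
  classical
  induction I using Finset.strongInduction generalizing A B T with
  | H I ih =>
    obtain ⟨A', hA', hcard⟩ := Finset.exists_subset_card_eq (s := A) (n := 2 * I.card - 1) (by lia)
    replace S := S.mono_right hA'
    have hIpos := hI.card_pos
    obtain ⟨a₀, ha₀⟩ : A'.Nonempty := Finset.card_pos.mp (by lia)
    have hI3 : 3 ≤ I.card := S.card_eq a₀ ha₀ ▸ Finset.card_le_card (S.subset a₀ ha₀)
    obtain ⟨x, hxI, hdeg⟩ := S.exists_card_filter_mem_le_five (by lia)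
    have herase := Finset.card_erase_of_mem hxI
    have hIx : (I.erase x).Nonempty := Finset.card_pos.mp (by lia)
    by_cases hx : ∃ a ∈ A', x ∈ T a
    · by_cases hcodeg : ∃ a ∈ A', x ∈ T a ∧
          ∃ y ∈ T a, x ≠ y ∧ {c ∈ A' | x ∈ T c ∧ y ∈ T c}.card ≤ 2
      · obtain ⟨a, ha, hxa, y, hya, hxy, hle⟩ := hcodeg
        refine ih _ (Finset.erase_ssubset hxI) (S.merge ha hxa hya hxy) hIx ?_
        have := A'.card_filter_add_card_filter_not fun c ↦ x ∈ T c ∧ y ∈ T c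
        lia
      · push Not at hcodeg
        exact S.hasMinor_of_card_filter_le_five hx hdeg hcodeg
    · push Not at hx
      refine ih _ (Finset.erase_ssubset hxI) (S.mono_left (Finset.erase_subset x I) fun a ha ↦ ?_)
        hIx (by lia)
      exact Finset.subset_erase.mpr ⟨S.subset a ha, hx a ha⟩

end TripleModel

theorem card_add_two_le_of_not_hasMinor [DecidableRel G.Adj]
    (hG : ¬ G.HasMinor (completeBipartiteGraph (Fin 3) (Fin 3))) {S A : Finset V}
    (hS : S.Nonempty) (hSA : Disjoint S A) (hA : ∀ a ∈ A, 3 ≤ {v ∈ S | G.Adj v a}.card) :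
    A.card + 2 ≤ 2 * S.card := by
  classical
  by_contra! h
  choose! T hTS hT using fun a ha ↦ Finset.exists_subset_card_eq (hA a ha)
  have hmodel : TripleModel G S A (fun v ↦ {v}) T :=
    { connected i _ := by simp
      pairwiseDisjoint := Set.pairwiseDisjoint_singleton_iff_injOn.mpr Function.injective_id.injOn
      notMem a ha i hi hai := Finset.disjoint_left.mp hSA hi (hai ▸ ha)
      subset a ha := (hTS a ha).trans (Finset.filter_subset _ _)
      card_eq := hT
      exists_adj a ha i hi := ⟨i, rfl, (Finset.mem_filter.mp (hTS a ha hi)).2⟩ }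
  exact hG (hmodel.hasMinor_of_two_mul_card_le hS (by lia))

end CompleteBipartiteMinor

section MinDegreeThree

variable {V : Type*} [Fintype V] {G : SimpleGraph V} [DecidableRel G.Adj]

lemma three_mul_ncard_oddComponents_add_four_le (hn : 6 ≤ Fintype.card V)
    (hdeg : ∀ v, 3 ≤ G.degree v) : 3 * G.oddComponents.ncard + 4 ≤ Fintype.card V := by
  have hfive : 5 * G.oddComponents.ncard ≤ Nat.card V := by
    refine mul_ncard_oddComponents_le G fun c hc ↦ ?_
    obtain ⟨v, hv⟩ := c.nonempty_supp
    have hlt := (hdeg v).trans_lt (degree_lt_ncard_supp hv)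
    obtain ⟨k, hk⟩ := hc
    lia
  have hparity := G.odd_ncard_oddComponents
  rw [Nat.card_eq_fintype_card] at hfive hparity
  grind

lemma ncard_isIsolated_induce_compl_add_two_le
    (hG : ¬ G.HasMinor (completeBipartiteGraph (Fin 3) (Fin 3)))
    (hdeg : ∀ v, 3 ≤ G.degree v) {s : Set V} (hs : s.Nonempty) :
    {v | (G.induce sᶜ).IsIsolated v}.ncard + 2 ≤ 2 * s.ncard := by
  classical
  rw [← Set.ncard_image_of_injective _ Subtype.val_injective, Set.ncard_eq_toFinset_card',
    Set.ncard_eq_toFinset_card']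
  refine card_add_two_le_of_not_hasMinor hG (Set.toFinset_nonempty.mpr hs) ?_ fun a ha ↦ ?_
  · rw [Set.disjoint_toFinset, Set.disjoint_right]
    rintro _ ⟨v, -, rfl⟩
    exact v.2
  · obtain ⟨v, hv, rfl⟩ := Set.mem_toFinset.mp ha
    refine (hdeg v).trans (Finset.card_le_card fun w hvw ↦ ?_)
    rw [mem_neighborFinset] at hvw
    have hws : w ∈ s := by_contra fun hw ↦ hv ⟨w, hw⟩ hvw
    simp [hws, hvw.symm]

lemma three_mul_ncard_oddComponents_induce_compl_add_four_le
    (hG : ¬ G.HasMinor (completeBipartiteGraph (Fin 3) (Fin 3))) (hn : 6 ≤ Fintype.card V)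
    (hdeg : ∀ v, 3 ≤ G.degree v) (s : Set V) :
    3 * (G.induce sᶜ).oddComponents.ncard + 4 ≤ 3 * s.ncard + Fintype.card V := by
  rcases s.eq_empty_or_nonempty with rfl | hs
  · rw [Set.compl_empty, ncard_oddComponents_congr (induceUnivIso G), Set.ncard_empty]
    simpa using three_mul_ncard_oddComponents_add_four_le hn hdeg
  · have hodd := three_mul_ncard_oddComponents_le (G := G.induce sᶜ)
    have hisolated := ncard_isIsolated_induce_compl_add_two_le hG hdeg hs
    have hcard := Set.ncard_add_ncard_compl s
    rw [Nat.card_coe_set_eq] at hodd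
    rw [Nat.card_eq_fintype_card] at hcard
    lia

end MinDegreeThree

theorem stmt_19_general {V : Type*} [Fintype V] (G : SimpleGraph V) [DecidableRel G.Adj]
    (hG : ¬ G.HasMinor (completeBipartiteGraph (Fin 3) (Fin 3)))
    (hn : 6 ≤ Fintype.card V) (hdeg : ∀ v : V, 3 ≤ G.degree v) :
    ∃ M : G.Subgraph, M.IsMatching ∧
      ⌈((Fintype.card V : ℝ) + 2) / 3⌉₊ ≤ M.edgeSet.ncard := by
  obtain ⟨M, hM, hcard⟩ := exists_isMatching_of_ncard_oddComponents_le
    (G := G) (d := (Fintype.card V - 4) / 3) fun s ↦ by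
      have := three_mul_ncard_oddComponents_induce_compl_add_four_le hG hn hdeg s
      lia
  refine ⟨M, hM, ?_⟩
  rw [Nat.card_eq_fintype_card] at hcard
  have hbound : Fintype.card V + 2 ≤ M.edgeSet.ncard * 3 := by lia
  rw [Nat.ceil_le, div_le_iff₀ (by norm_num)]
  exact_mod_cast hbound

/-- Nishizeki–Baybars: every connected planar graph with `n ≥ 10` vertices and
minimum degree at least 3 contains a matching of size at least `⌈(n + 2)/3⌉`. -/
theorem stmt_19 {V : Type*} [Fintype V] [DecidableEq V]
    (G : SimpleGraph V) [DecidableRel G.Adj]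
    (hG : G.IsPlanar) (hconn : G.Connected)
    (hn : 10 ≤ Fintype.card V) (hdeg : ∀ v : V, 3 ≤ G.degree v) :
    ∃ M : G.Subgraph, M.IsMatching ∧
      ⌈((Fintype.card V : ℝ) + 2) / 3⌉₊ ≤ M.edgeSet.ncard :=
  stmt_19_general G hG.2 (by lia) hdeg
end
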